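/- There is an absolute constant A such that for every n ≥ 2, the mixing time of the lazy triangulation flip walk on the triangulations of the convex (n+2)-gon is at most A·n^3·(log n)^3; that is, for every integer t ≥ A·n^3·(log n)^3 and every starting triangulation x, the total variation distance between the distribution of the walk after t steps (row x of P^t) and the uniform distribution on all triangulations is at most 1/4. -/

import Mathlib

open Finset

/-- `x` lies strictly between `a` and `b` in cyclic (counterclockwise) order
on the vertices `0, 1, …, m-1` of a convex `m`-gon. -/
def CycBtw {m : ℕ} (a b x : Fin m) : Prop :=
  0 < (x - a).val ∧ (x - a).val < (b - a).val

/-- `a` and `b` are adjacent (cyclically consecutive) vertices of the convex `m`-gon. -/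
def PolyAdj {m : ℕ} (a b : Fin m) : Prop :=
  (b - a).val = 1 ∨ (a - b).val = 1

/-- `e` is a side of the convex `m`-gon. -/
def IsSide {m : ℕ} (e : Sym2 (Fin m)) : Prop :=
  ∃ a b : Fin m, e = s(a, b) ∧ PolyAdj a b

/-- `e` is a diagonal of the convex `m`-gon: a pair of distinct non-adjacent vertices. -/
def IsDiagonal {m : ℕ} (e : Sym2 (Fin m)) : Prop :=
  ¬ e.IsDiag ∧ ∀ a b : Fin m, e = s(a, b) → ¬ PolyAdj a b

/-- Two chords cross iff exactly one endpoint of one lies strictly between the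
endpoints of the other (for every representation of the endpoints). -/
def Crosses {m : ℕ} (e f : Sym2 (Fin m)) : Prop :=
  ∀ a b : Fin m, e = s(a, b) →
    ∃ c d : Fin m, f = s(c, d) ∧ Xor' (CycBtw a b c) (CycBtw a b d)

/-- A triangulation of the convex `(n+2)`-gon: a maximal set of pairwise
non-crossing diagonals. -/
def IsTriangulation (n : ℕ) (t : Finset (Sym2 (Fin (n + 2)))) : Prop :=
  (∀ e ∈ t, IsDiagonal e) ∧
  (∀ e ∈ t, ∀ f ∈ t, ¬ Crosses e f) ∧
  (∀ e, IsDiagonal e → (∀ f ∈ t, ¬ Crosses e f) → e ∈ t)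

/-- The type of triangulations of the convex `(n+2)`-gon. -/
def Triangulation (n : ℕ) : Type :=
  {t : Finset (Sym2 (Fin (n + 2))) // IsTriangulation n t}

instance (n : ℕ) : DecidableEq (Triangulation n) := fun a b =>
  decidable_of_iff (a.val = b.val) Subtype.ext_iff.symm

noncomputable instance (n : ℕ) : Fintype (Triangulation n) := by
  classical exact Subtype.fintype _

/-- The associahedron graph `K_n`: vertices are the triangulations of the convex
`(n+2)`-gon, with an edge between two triangulations iff they differ in exactly
one diagonal (a flip). -/
def assocGraph (n : ℕ) : SimpleGraph (Triangulation n) where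
  Adj s t := (s.val \ t.val).card = 1 ∧ (t.val \ s.val).card = 1
  symm := ⟨fun s t h => ⟨h.2, h.1⟩⟩
  loopless := ⟨fun s h => by simp at h⟩

/-- The set of edges of `G` with exactly one endpoint in `S`. -/
def edgeBoundary {V : Type*} (G : SimpleGraph V) (S : Set V) : Set (Sym2 V) :=
  {e | e ∈ G.edgeSet ∧ ∃ u v : V, e = s(u, v) ∧ u ∈ S ∧ v ∉ S}

open Classical in
/-- The transition matrix of the lazy triangulation flip walk on `K_n`:
from a triangulation, with probability 1/2 stay put, otherwise pick one of the
`n - 1` diagonals uniformly at random and flip it. -/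
noncomputable def flipWalkMatrix (n : ℕ) :
    Matrix (Triangulation n) (Triangulation n) ℝ := fun s t =>
  if (assocGraph n).Adj s t then 1 / (2 * ((n : ℝ) - 1))
  else if s = t then 1 / 2 else 0

/-!
Sweeping the polygon by its vertices encodes triangulations as ballot paths, and a flip becomes the
operation of postponing one down-step of the path. Paths with `n` up-steps from height `k` split
according to their first step, so that entropy is bounded by induction on `(n, k)`: at each split it
increases only through the gap between the two conditional means of `g ^ 2`. Counting paths shows
that the gap is at most the variation of `g ^ 2` under exchanges of two adjacent steps, divided by
the size of the slice; exchanges are compositions of flips in which each flip is used at most twice,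
and Cauchy-Schwarz turns the variation of `g ^ 2` into the flip energy of `g`. Summed over the
splits this is a logarithmic Sobolev inequality with constant of order `n ^ 3` for the lazy walk.
Entropy then decays by the factor `1 - 1 / C` at each step, and Pinsker's inequality together with
`log |V| = O(n)` gives mixing in time of order `n ^ 3 * log n`.
-/

namespace FlipWalk

open scoped BigOperators Matrix

/-! ### Entropy -/

/-- The entropy functional `#s • (𝔼 f log f - 𝔼 f log 𝔼 f)` of a nonnegative function with respect
to counting measure on `s`, unnormalised so that it adds up over disjoint unions. -/
noncomputable def entropy {ι : Type*} (s : Finset ι) (f : ι → ℝ) : ℝ :=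
  ∑ i ∈ s, f i * Real.log (f i) - (∑ i ∈ s, f i) * Real.log ((∑ i ∈ s, f i) / #s)

lemma mul_log_tangent_add_sq_sqrt_sub_le {a b : ℝ} (ha : 0 < a) (hb : 0 ≤ b) :
    a * Real.log a + (1 + Real.log a) * (b - a) + (√b - √a) ^ 2 ≤ b * Real.log b := by
  have hsa : √a ^ 2 = a := Real.sq_sqrt ha.le
  have hsb : √b ^ 2 = b := Real.sq_sqrt hb
  rcases hb.eq_or_lt with rfl | hb
  · simp only [Real.sqrt_zero, zero_mul]
    linarith
  have hb' : 0 < √b := Real.sqrt_pos.mpr hb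
  have hlog : Real.log a / 2 - Real.log b / 2 ≤ √a / √b - 1 := by
    have h := Real.log_le_sub_one_of_pos (div_pos (Real.sqrt_pos.mpr ha) hb')
    rwa [Real.log_div (Real.sqrt_pos.mpr ha).ne' hb'.ne', Real.log_sqrt ha.le,
      Real.log_sqrt hb.le] at h
  have hmul : b * (√a / √b) = √a * √b := by
    rw [mul_div_assoc', div_eq_iff hb'.ne']
    linear_combination (-√a) * hsb
  linarith [mul_le_mul_of_nonneg_left hlog hb.le]

lemma jensen_mul_log_add_sq_sqrt_sub_le {ι : Type*} {s : Finset ι} {p f : ι → ℝ}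
    (hp : ∀ i ∈ s, 0 ≤ p i) (hs : ∑ i ∈ s, p i = 1) (hf : ∀ i ∈ s, 0 ≤ f i) :
    (∑ i ∈ s, p i * f i) * Real.log (∑ i ∈ s, p i * f i)
        + ∑ i ∈ s, p i * (√(f i) - √(∑ i ∈ s, p i * f i)) ^ 2
      ≤ ∑ i ∈ s, p i * (f i * Real.log (f i)) := by
  have hpf : ∀ i ∈ s, 0 ≤ p i * f i := fun i hi => mul_nonneg (hp i hi) (hf i hi)
  obtain ⟨a, ha⟩ : ∃ a, ∑ i ∈ s, p i * f i = a := ⟨_, rfl⟩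
  have ha0 : 0 ≤ a := ha ▸ sum_nonneg hpf
  rw [ha]
  rcases ha0.eq_or_lt with rfl | hpos
  · have hz := (sum_eq_zero_iff_of_nonneg hpf).mp ha
    simp only [Real.sqrt_zero, sub_zero, zero_mul, zero_add]
    refine sum_le_sum fun i hi => ?_
    rw [Real.sq_sqrt (hf i hi), ← mul_assoc, hz i hi, zero_mul]
  · calc a * Real.log a + ∑ i ∈ s, p i * (√(f i) - √a) ^ 2
        = (∑ i ∈ s, p i) * (a * Real.log a)
            + (1 + Real.log a) * (∑ i ∈ s, p i * f i - (∑ i ∈ s, p i) * a)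
            + ∑ i ∈ s, p i * (√(f i) - √a) ^ 2 := by rw [hs, ha]; ring
      _ = ∑ i ∈ s, p i * (a * Real.log a + (1 + Real.log a) * (f i - a) + (√(f i) - √a) ^ 2) := by
        rw [sum_mul, sum_mul, ← sum_sub_distrib, mul_sum, ← sum_add_distrib, ← sum_add_distrib]
        exact sum_congr rfl fun i _ => by ring
      _ ≤ ∑ i ∈ s, p i * (f i * Real.log (f i)) := sum_le_sum fun i hi =>
        mul_le_mul_of_nonneg_left (mul_log_tangent_add_sq_sqrt_sub_le hpos (hf i hi)) (hp i hi)

lemma sum_sq_sqrt_sub_one_le_entropy {ι : Type*} {s : Finset ι} {f : ι → ℝ}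
    (hf : ∀ i ∈ s, 0 ≤ f i) (hsum : ∑ i ∈ s, f i = #s) :
    ∑ i ∈ s, (√(f i) - 1) ^ 2 ≤ entropy s f := by
  have h := sum_le_sum fun i hi => mul_log_tangent_add_sq_sqrt_sub_le one_pos (hf i hi)
  have hlog : Real.log ((#s : ℝ) / #s) = 0 := by
    rcases eq_or_ne (#s : ℝ) 0 with h0 | h0 <;> simp [h0]
  simp only [Real.log_one, mul_zero, zero_add, add_zero, one_mul, Real.sqrt_one,
    sum_add_distrib, sum_sub_distrib, hsum, sum_const, nsmul_eq_mul, mul_one, sub_self] at h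
  rwa [entropy, hsum, hlog, mul_zero, sub_zero]

lemma sq_half_sum_abs_sub_one_le {ι : Type*} {s : Finset ι} {f : ι → ℝ}
    (hf : ∀ i ∈ s, 0 ≤ f i) (hsum : ∑ i ∈ s, f i = #s) :
    (1 / 2 * ∑ i ∈ s, |f i - 1|) ^ 2 ≤ #s * entropy s f := by
  have hfac : ∀ i ∈ s, |f i - 1| = |√(f i) - 1| * |√(f i) + 1| := fun i hi => by
    rw [← abs_mul]
    congr 1
    linear_combination -Real.sq_sqrt (hf i hi)
  have hplus : ∑ i ∈ s, (√(f i) + 1) ^ 2 ≤ 4 * (#s : ℝ) := calc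
    ∑ i ∈ s, (√(f i) + 1) ^ 2 ≤ ∑ i ∈ s, (2 * f i + 2) := sum_le_sum fun i hi => by
      nlinarith [Real.sq_sqrt (hf i hi), sq_nonneg (√(f i) - 1)]
    _ = 4 * #s := by
      rw [sum_add_distrib, ← mul_sum, hsum, sum_const, nsmul_eq_mul]
      ring
  have hcs := sum_mul_sq_le_sq_mul_sq s (fun i => |√(f i) - 1|) (fun i => |√(f i) + 1|)
  simp only [sq_abs] at hcs
  have hminus := sum_sq_sqrt_sub_one_le_entropy hf hsum
  rw [sum_congr rfl hfac]
  nlinarith [mul_le_mul hminus hplus (sum_nonneg fun i _ => sq_nonneg _)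
    ((sum_nonneg fun i _ => sq_nonneg _).trans hminus)]

section Entropy

variable {ι κ : Type*} [DecidableEq κ]

lemma entropy_image {e : ι → κ} (he : Function.Injective e) (s : Finset ι) (f : κ → ℝ) :
    entropy (s.image e) f = entropy s (fun i => f (e i)) := by
  simp only [entropy, sum_image he.injOn, card_image_of_injective s he]

lemma mul_log_div_le {a p ρ : ℝ} (ha : 0 ≤ a) (hp : 0 < p) (hρ : 0 < ρ) :
    a * Real.log (a / p) ≤ a * Real.log ρ + a * (a / p / ρ - 1) := by
  rcases ha.eq_or_lt with rfl | ha
  · simp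
  · have h := Real.log_le_sub_one_of_pos (x := a / p / ρ) (by positivity)
    rw [Real.log_div (by positivity) hρ.ne'] at h
    nlinarith

lemma two_point_entropy_le {a b p q E : ℝ} (ha : 0 ≤ a) (hb : 0 ≤ b) (hp : 0 < p) (hq : 0 < q)
    (hE : 0 ≤ E) (h : (a / p - b / q) ^ 2 ≤ E * (a + b)) :
    a * Real.log (a / p) + b * Real.log (b / q) - (a + b) * Real.log ((a + b) / (p + q))
      ≤ p * q * E := by
  rcases (add_nonneg ha hb).eq_or_lt with h0 | hpos
  · obtain rfl : a = 0 := by linarith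
    obtain rfl : b = 0 := by linarith
    simp only [zero_mul, add_zero, sub_zero]
    positivity
  · obtain ⟨ρ, hρ⟩ : ∃ ρ, (a + b) / (p + q) = ρ := ⟨_, rfl⟩
    have hρ0 : 0 < ρ := hρ ▸ div_pos hpos (add_pos hp hq)
    have hsq : a * (a / p / ρ - 1) + b * (b / q / ρ - 1)
        = p * q * ((a / p - b / q) ^ 2 / (a + b)) := by
      rw [← hρ]
      field_simp
      ring
    have hle : p * q * ((a / p - b / q) ^ 2 / (a + b)) ≤ p * q * E := by
      gcongr
      rwa [div_le_iff₀ hpos]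
    rw [hρ]
    linarith [mul_log_div_le ha hp hρ0, mul_log_div_le hb hq hρ0]

lemma entropy_union_le {s t : Finset κ} (hst : Disjoint s t) (hs : s.Nonempty) (ht : t.Nonempty)
    {f : κ → ℝ} (hf : ∀ i, 0 ≤ f i) {E : ℝ} (hE : 0 ≤ E)
    (h : (𝔼 i ∈ s, f i - 𝔼 i ∈ t, f i) ^ 2 ≤ E * (∑ i ∈ s, f i + ∑ i ∈ t, f i)) :
    entropy (s ∪ t) f ≤ entropy s f + entropy t f + #s * #t * E := by
  rw [expect_eq_sum_div_card, expect_eq_sum_div_card] at h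
  have htwo := two_point_entropy_le (sum_nonneg fun i _ => hf i) (sum_nonneg fun i _ => hf i)
    (Nat.cast_pos.mpr hs.card_pos) (Nat.cast_pos.mpr ht.card_pos) hE h
  simp only [entropy, sum_union hst, card_union_of_disjoint hst, Nat.cast_add]
  linarith

end Entropy

/-! ### Entropy decay of a lazy chain -/

section Chain

variable {V : Type*} [Fintype V]

/-- The Dirichlet form `½ ∑ P x y (g x - g y)²` of a transition matrix whose stationary
distribution is uniform, taken with respect to counting measure. -/
noncomputable def dirichletForm (P : Matrix V V ℝ) (g : V → ℝ) : ℝ :=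
  1 / 2 * ∑ x, ∑ y, P x y * (g x - g y) ^ 2

variable [DecidableEq V] {P : Matrix V V ℝ}

lemma half_sum_mul_sq_sub_le (hP : P ∈ doublyStochastic ℝ V) (hlazy : ∀ x, 1 / 2 ≤ P x x)
    (g : V → ℝ) (c : ℝ) (y : V) :
    1 / 2 * ∑ x, P x y * (g x - g y) ^ 2 ≤ ∑ x, P x y * (g x - c) ^ 2 := by
  have hsum : P y y + ∑ x ∈ univ.erase y, P x y = 1 :=
    (add_sum_erase _ _ (mem_univ y)).trans (sum_col_of_mem_doublyStochastic hP y)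
  have hle : (∑ x ∈ univ.erase y, P x y) * (g y - c) ^ 2 ≤ P y y * (g y - c) ^ 2 :=
    mul_le_mul_of_nonneg_right (by linarith [hlazy y]) (sq_nonneg _)
  rw [← add_sum_erase _ _ (mem_univ y), ← add_sum_erase _ _ (mem_univ y), sub_self]
  calc 1 / 2 * (P y y * 0 ^ 2 + ∑ x ∈ univ.erase y, P x y * (g x - g y) ^ 2)
      = ∑ x ∈ univ.erase y, P x y * (1 / 2 * (g x - g y) ^ 2) := by
        rw [zero_pow two_ne_zero, mul_zero, zero_add, mul_sum]
        exact sum_congr rfl fun x _ => by ring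
    _ ≤ ∑ x ∈ univ.erase y, P x y * ((g y - c) ^ 2 + (g x - c) ^ 2) :=
        sum_le_sum fun x _ => mul_le_mul_of_nonneg_left
          (by nlinarith [sq_nonneg (g x - c + (g y - c))]) (nonneg_of_mem_doublyStochastic hP)
    _ = (∑ x ∈ univ.erase y, P x y) * (g y - c) ^ 2
          + ∑ x ∈ univ.erase y, P x y * (g x - c) ^ 2 := by
        simp only [mul_add, sum_add_distrib, sum_mul]
    _ ≤ P y y * (g y - c) ^ 2 + ∑ x ∈ univ.erase y, P x y * (g x - c) ^ 2 := by gcongr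

lemma sum_vecMul_of_mem_doublyStochastic (hP : P ∈ doublyStochastic ℝ V) (f : V → ℝ) :
    ∑ y, (f ᵥ* P) y = ∑ x, f x := by
  simp only [Matrix.vecMul, dotProduct]
  rw [sum_comm]
  simp only [← mul_sum, sum_row_of_mem_doublyStochastic hP, mul_one]

lemma entropy_vecMul_add_dirichletForm_le (hP : P ∈ doublyStochastic ℝ V)
    (hlazy : ∀ x, 1 / 2 ≤ P x x) {f : V → ℝ} (hf : ∀ x, 0 ≤ f x) :
    entropy univ (f ᵥ* P) + dirichletForm P (fun x => √(f x)) ≤ entropy univ f := by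
  have hjensen := sum_le_sum fun y (_ : y ∈ univ) =>
    jensen_mul_log_add_sq_sqrt_sub_le (s := univ) (p := fun x => P x y)
      (fun x _ => nonneg_of_mem_doublyStochastic hP) (sum_col_of_mem_doublyStochastic hP y)
      (fun x _ => hf x)
  have hform := sum_le_sum fun y (_ : y ∈ univ) =>
    half_sum_mul_sq_sub_le hP hlazy (fun x => √(f x)) (√(∑ x, P x y * f x)) y
  have hright : ∑ y, ∑ x, P x y * (f x * Real.log (f x)) = ∑ x, f x * Real.log (f x) := by
    rw [sum_comm]
    simp only [← sum_mul, sum_row_of_mem_doublyStochastic hP, one_mul]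
  have hvec : ∀ y, ∑ x, P x y * f x = (f ᵥ* P) y := fun y => sum_congr rfl fun x _ => mul_comm _ _
  rw [← mul_sum, sum_comm] at hform
  rw [sum_add_distrib, hright] at hjensen
  simp only [hvec] at hjensen hform
  rw [entropy, entropy, dirichletForm, sum_vecMul_of_mem_doublyStochastic hP]
  linarith

variable {C : ℝ}

lemma entropy_vecMul_le (hP : P ∈ doublyStochastic ℝ V) (hlazy : ∀ x, 1 / 2 ≤ P x x) (hC : 0 < C)
    (hls : ∀ g : V → ℝ, entropy univ (fun x => g x ^ 2) ≤ C * dirichletForm P g)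
    {f : V → ℝ} (hf : ∀ x, 0 ≤ f x) :
    entropy univ (f ᵥ* P) ≤ (1 - 1 / C) * entropy univ f := by
  have hform : entropy univ f / C ≤ dirichletForm P (fun x => √(f x)) := by
    have h := hls fun x => √(f x)
    simp only [Real.sq_sqrt (hf _)] at h
    rwa [div_le_iff₀' hC]
  have hstep := entropy_vecMul_add_dirichletForm_le hP hlazy hf
  linear_combination hform + hstep

lemma entropy_pow_row_le (hP : P ∈ doublyStochastic ℝ V) (hlazy : ∀ x, 1 / 2 ≤ P x x) (hC : 0 < C)
    (hls : ∀ g : V → ℝ, entropy univ (fun x => g x ^ 2) ≤ C * dirichletForm P g)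
    (x : V) (t : ℕ) :
    entropy univ (fun y => Fintype.card V * (P ^ t) x y)
      ≤ Real.exp (-(t / C)) * (Fintype.card V * Real.log (Fintype.card V)) := by
  have hnonneg (t : ℕ) (y : V) : 0 ≤ Fintype.card V * (P ^ t) x y :=
    mul_nonneg (Nat.cast_nonneg _) (nonneg_of_mem_doublyStochastic (pow_mem hP t))
  have hsum (t : ℕ) : ∑ y, (Fintype.card V : ℝ) * (P ^ t) x y = #(univ : Finset V) := by
    rw [← mul_sum, sum_row_of_mem_doublyStochastic (pow_mem hP t), mul_one, card_univ]
  induction t with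
  | zero => simp [entropy, Matrix.one_apply]
  | succ t ih =>
    have hpos : 0 ≤ entropy univ (fun y => Fintype.card V * (P ^ t) x y) :=
      (sum_nonneg fun y _ => sq_nonneg _).trans
        (sum_sq_sqrt_sub_one_le_entropy (fun y _ => hnonneg t y) (hsum t))
    have hrow : (fun y => Fintype.card V * (P ^ (t + 1)) x y)
        = (fun y => Fintype.card V * (P ^ t) x y) ᵥ* P := by
      funext y
      simp only [pow_succ, Matrix.mul_apply, Matrix.vecMul, dotProduct, mul_sum, mul_assoc]
    rw [hrow]
    calc _ ≤ (1 - 1 / C) * entropy univ (fun y => Fintype.card V * (P ^ t) x y) :=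
          entropy_vecMul_le hP hlazy hC hls (hnonneg t)
      _ ≤ Real.exp (-(1 / C)) * entropy univ (fun y => Fintype.card V * (P ^ t) x y) := by
          gcongr
          linarith [Real.add_one_le_exp (-(1 / C))]
      _ ≤ Real.exp (-(1 / C))
            * (Real.exp (-(t / C)) * (Fintype.card V * Real.log (Fintype.card V))) := by gcongr
      _ = _ := by
          rw [← mul_assoc, ← Real.exp_add]
          congr 2
          push_cast
          ring

theorem sq_tvDist_pow_row_le (hP : P ∈ doublyStochastic ℝ V) (hlazy : ∀ x, 1 / 2 ≤ P x x)
    (hC : 0 < C) (hls : ∀ g : V → ℝ, entropy univ (fun x => g x ^ 2) ≤ C * dirichletForm P g)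
    (x : V) (t : ℕ) :
    (1 / 2 * ∑ y, |(P ^ t) x y - 1 / Fintype.card V|) ^ 2
      ≤ Real.exp (-(t / C)) * Real.log (Fintype.card V) := by
  have hV : 0 < (Fintype.card V : ℝ) := Nat.cast_pos.mpr (Fintype.card_pos_iff.mpr ⟨x⟩)
  have hscale : ∑ y, |(P ^ t) x y - 1 / Fintype.card V|
      = (∑ y, |Fintype.card V * (P ^ t) x y - 1|) / Fintype.card V := by
    rw [sum_div]
    refine sum_congr rfl fun y _ => ?_
    rw [← abs_of_pos hV, ← abs_div, abs_of_pos hV, sub_div, mul_div_cancel_left₀ _ hV.ne']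
  have hpinsker := sq_half_sum_abs_sub_one_le (s := univ)
    (f := fun y => Fintype.card V * (P ^ t) x y)
    (fun y _ => mul_nonneg hV.le (nonneg_of_mem_doublyStochastic (pow_mem hP t)))
    (by rw [← mul_sum, sum_row_of_mem_doublyStochastic (pow_mem hP t), mul_one, card_univ])
  rw [card_univ] at hpinsker
  rw [hscale, mul_div_assoc', div_pow, div_le_iff₀ (by positivity)]
  calc _ ≤ _ := hpinsker
    _ ≤ Fintype.card V *
        (Real.exp (-(t / C)) * (Fintype.card V * Real.log (Fintype.card V))) :=
      mul_le_mul_of_nonneg_left (entropy_pow_row_le hP hlazy hC hls x t) hV.le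
    _ = _ := by ring

theorem tvDist_pow_row_le_quarter (hP : P ∈ doublyStochastic ℝ V) (hlazy : ∀ x, 1 / 2 ≤ P x x)
    (hC : 0 < C) (hls : ∀ g : V → ℝ, entropy univ (fun x => g x ^ 2) ≤ C * dirichletForm P g)
    {L : ℝ} (hL : 0 < L) (hV : Real.log (Fintype.card V) ≤ L) {t : ℕ}
    (ht : C * Real.log (16 * L) ≤ t) (x : V) :
    1 / 2 * ∑ y, |(P ^ t) x y - 1 / Fintype.card V| ≤ 1 / 4 := by
  refine le_of_sq_le_sq ?_ (by norm_num)
  calc (1 / 2 * ∑ y, |(P ^ t) x y - 1 / Fintype.card V|) ^ 2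
      ≤ Real.exp (-(t / C)) * Real.log (Fintype.card V) :=
        sq_tvDist_pow_row_le hP hlazy hC hls x t
    _ ≤ Real.exp (-Real.log (16 * L)) * L := by
        gcongr
        rwa [le_div_iff₀' hC]
    _ = (1 / 4) ^ 2 := by
        rw [Real.exp_neg, Real.exp_log (by positivity)]
        field_simp
        norm_num

end Chain

/-! ### Ballot paths -/

/-- Ballot paths, written as words of up-steps `true` and down-steps `false`: the paths with `n`
up-steps leading from height `k` to height `0` without going below `0`. -/
def ballotWords : ℕ → ℕ → Finset (List Bool)
  | 0, k => {List.replicate k false}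
  | n + 1, 0 => (ballotWords n 1).image (List.cons true)
  | n + 1, k + 1 =>
    (ballotWords (n + 1) k).image (List.cons false) ∪ (ballotWords n (k + 2)).image (List.cons true)
termination_by n k => (n, k)

lemma ballotWords_zero (k : ℕ) : ballotWords 0 k = {List.replicate k false} := by
  rw [ballotWords]

lemma ballotWords_succ_zero (n : ℕ) :
    ballotWords (n + 1) 0 = (ballotWords n 1).image (List.cons true) := by
  rw [ballotWords]

lemma ballotWords_succ_succ (n k : ℕ) : ballotWords (n + 1) (k + 1) =
    (ballotWords (n + 1) k).image (List.cons false)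
      ∪ (ballotWords n (k + 2)).image (List.cons true) := by
  rw [ballotWords]

@[elab_as_elim]
lemma ballot_induction {motive : ℕ → ℕ → Prop} (zero : ∀ k, motive 0 k)
    (succ_zero : ∀ n, motive n 1 → motive (n + 1) 0)
    (succ_succ : ∀ n k, motive (n + 1) k → motive n (k + 2) → motive (n + 1) (k + 1))
    (n k : ℕ) : motive n k := by
  induction n, k using ballotWords.induct with
  | case1 k => exact zero k
  | case2 n ih => exact succ_zero n ih
  | case3 n k ih₁ ih₂ => exact succ_succ n k ih₁ ih₂

section Sums

variable {M : Type*} [AddCommMonoid M]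

lemma sum_ballotWords_zero (k : ℕ) (f : List Bool → M) :
    ∑ w ∈ ballotWords 0 k, f w = f (List.replicate k false) := by
  rw [ballotWords_zero, sum_singleton]

lemma sum_ballotWords_succ_zero (n : ℕ) (f : List Bool → M) :
    ∑ w ∈ ballotWords (n + 1) 0, f w = ∑ w ∈ ballotWords n 1, f (true :: w) := by
  rw [ballotWords_succ_zero, sum_image List.cons_injective.injOn]

lemma sum_ballotWords_succ_succ (n k : ℕ) (f : List Bool → M) :
    ∑ w ∈ ballotWords (n + 1) (k + 1), f w
      = ∑ w ∈ ballotWords (n + 1) k, f (false :: w)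
        + ∑ w ∈ ballotWords n (k + 2), f (true :: w) := by
  have hdisj : Disjoint ((ballotWords (n + 1) k).image (List.cons false))
      ((ballotWords n (k + 2)).image (List.cons true)) := by
    simp [disjoint_left]
  rw [ballotWords_succ_succ, sum_union hdisj, sum_image List.cons_injective.injOn,
    sum_image List.cons_injective.injOn]

end Sums

lemma card_ballotWords_zero (k : ℕ) : #(ballotWords 0 k) = 1 := by
  rw [card_eq_sum_ones, sum_ballotWords_zero]

lemma card_ballotWords_succ_zero (n : ℕ) : #(ballotWords (n + 1) 0) = #(ballotWords n 1) := by
  simp only [card_eq_sum_ones, sum_ballotWords_succ_zero]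

lemma card_ballotWords_succ_succ (n k : ℕ) :
    #(ballotWords (n + 1) (k + 1)) = #(ballotWords (n + 1) k) + #(ballotWords n (k + 2)) := by
  simp only [card_eq_sum_ones, sum_ballotWords_succ_succ]

lemma card_ballotWords_mul_factorial (n k : ℕ) :
    #(ballotWords n k) * (n.factorial * (n + k + 1).factorial)
      = (k + 1) * (2 * n + k).factorial := by
  induction n, k using ballot_induction with
  | zero k => simp [card_ballotWords_zero, Nat.factorial_succ]
  | succ_zero n ih =>
    rw [card_ballotWords_succ_zero, show 2 * (n + 1) + 0 = 2 * n + 1 + 1 by ring,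
      Nat.factorial_succ n, Nat.factorial_succ (2 * n + 1)]
    linear_combination (n + 1) * ih
  | succ_succ n k ih₁ ih₂ =>
    rw [show n + 1 + k + 1 = n + k + 2 by ring, show 2 * (n + 1) + k = 2 * n + k + 2 by ring,
      Nat.factorial_succ n] at ih₁
    rw [show n + (k + 2) + 1 = n + k + 2 + 1 by ring, ← add_assoc,
      Nat.factorial_succ (n + k + 2)] at ih₂
    rw [card_ballotWords_succ_succ, show n + 1 + (k + 1) + 1 = n + k + 2 + 1 by ring,
      show 2 * (n + 1) + (k + 1) = 2 * n + k + 2 + 1 by ring, Nat.factorial_succ n,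
      Nat.factorial_succ (n + k + 2), Nat.factorial_succ (2 * n + k + 2)]
    linear_combination (n + k + 2 + 1) * ih₁ + (n + 1) * ih₂

lemma card_ballotWords_pos (n k : ℕ) : 0 < #(ballotWords n k) := by
  have h : 0 < #(ballotWords n k) * (n.factorial * (n + k + 1).factorial) := by
    rw [card_ballotWords_mul_factorial]
    positivity
  exact Nat.pos_of_mul_pos_right h

lemma cast_card_ballotWords_pos (n k : ℕ) : (0 : ℝ) < #(ballotWords n k) :=
  Nat.cast_pos.mpr (card_ballotWords_pos n k)

lemma card_ballotWords_succ_right (n k : ℕ) :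
    (k + 1) * (n + k + 2) * #(ballotWords n (k + 1))
      = (k + 2) * (2 * n + k + 1) * #(ballotWords n k) := by
  have h₀ := card_ballotWords_mul_factorial n k
  have h₁ := card_ballotWords_mul_factorial n (k + 1)
  rw [← add_assoc, ← add_assoc, Nat.factorial_succ, Nat.factorial_succ (2 * n + k)] at h₁
  have hpos : 0 < n.factorial * (n + k + 1).factorial := by positivity
  refine Nat.eq_of_mul_eq_mul_right hpos ?_
  linear_combination (k + 1) * h₁ - (k + 2) * (2 * n + k + 1) * h₀

lemma card_ballotWords_succ_left (n k : ℕ) :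
    (n + 1) * (k + 2) * #(ballotWords (n + 1) k)
      = (k + 1) * (2 * n + 2 + k) * #(ballotWords n (k + 1)) := by
  have h₀ := card_ballotWords_mul_factorial n (k + 1)
  have h₁ := card_ballotWords_mul_factorial (n + 1) k
  rw [show 2 * (n + 1) + k = 2 * n + (k + 1) + 1 by ring, Nat.factorial_succ (2 * n + (k + 1)),
    Nat.factorial_succ n, show n + 1 + k = n + (k + 1) by ring] at h₁
  have hpos : 0 < n.factorial * (n + (k + 1) + 1).factorial := by positivity
  refine Nat.eq_of_mul_eq_mul_right hpos ?_
  linear_combination (k + 2) * h₁ - (k + 1) * (2 * n + 2 + k) * h₀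

lemma card_ballotWords_mul_le (n k : ℕ) :
    #(ballotWords (n + 1) k) * #(ballotWords n (k + 2))
      ≤ #(ballotWords (n + 1) (k + 1)) * #(ballotWords n (k + 1)) := by
  have h₁ := card_ballotWords_succ_right (n + 1) k
  have h₂ := card_ballotWords_succ_right n (k + 1)
  have hcoeff : (k + 1) * (k + 3) * (2 * n + k + 2) ≤ (k + 2) * (k + 2) * (2 * n + k + 3) := by
    nlinarith
  refine Nat.le_of_mul_le_mul_left (c := (k + 2) * (k + 2) * (2 * n + k + 3) * (n + k + 3)) ?_
    (by positivity)
  calc (k + 2) * (k + 2) * (2 * n + k + 3) * (n + k + 3)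
        * (#(ballotWords (n + 1) k) * #(ballotWords n (k + 2)))
      = (k + 1) * (k + 3) * (2 * n + k + 2) * (n + k + 3)
        * (#(ballotWords (n + 1) (k + 1)) * #(ballotWords n (k + 1))) := by
        linear_combination (k + 2) * (n + k + 3) * #(ballotWords n (k + 2)) * h₁.symm
          + (k + 1) * (n + k + 3) * #(ballotWords (n + 1) (k + 1)) * h₂
    _ ≤ _ := by gcongr

lemma card_ballotWords_succ_right_le (n k : ℕ) :
    #(ballotWords n (k + 1)) ≤ 4 * #(ballotWords n k) := by
  refine Nat.le_of_mul_le_mul_left (c := (k + 1) * (n + k + 2)) ?_ (by positivity)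
  rw [card_ballotWords_succ_right, ← mul_assoc]
  exact Nat.mul_le_mul_right _ (by nlinarith)

lemma card_ballotWords_succ_left_le (n k : ℕ) :
    (n + 1) * #(ballotWords (n + 1) k) ≤ (2 * n + 2 + k) * #(ballotWords n (k + 1)) := by
  refine Nat.le_of_mul_le_mul_left (c := k + 2) ?_ (by positivity)
  calc (k + 2) * ((n + 1) * #(ballotWords (n + 1) k))
      = (k + 1) * ((2 * n + 2 + k) * #(ballotWords n (k + 1))) := by
        linear_combination card_ballotWords_succ_left n k
    _ ≤ (k + 2) * ((2 * n + 2 + k) * #(ballotWords n (k + 1))) := by gcongr; omega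

lemma card_ballotWords_le_two_pow (n k : ℕ) : #(ballotWords n k) ≤ 2 ^ (2 * n + k) := by
  induction n, k using ballot_induction with
  | zero k => exact (card_ballotWords_zero k).trans_le Nat.one_le_two_pow
  | succ_zero n ih =>
    rw [card_ballotWords_succ_zero]
    exact ih.trans (Nat.pow_le_pow_right two_pos (by omega))
  | succ_succ n k ih₁ ih₂ =>
    rw [card_ballotWords_succ_succ, show 2 * (n + 1) + (k + 1) = 2 * (n + 1) + k + 1 by ring,
      pow_succ, mul_two]
    exact add_le_add ih₁ (ih₂.trans_eq (by ring))

/-- The variation of `h` along the exchanges of two adjacent letters of a ballot path. -/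
def swapVariation : ℕ → ℕ → (List Bool → ℝ) → ℝ
  | 0, _, _ => 0
  | n + 1, 0, h => swapVariation n 1 (fun w => h (true :: w))
  | n + 1, k + 1, h => swapVariation (n + 1) k (fun w => h (false :: w))
      + swapVariation n (k + 2) (fun w => h (true :: w))
      + ∑ v ∈ ballotWords n (k + 1), |h (false :: true :: v) - h (true :: false :: v)|
termination_by n k _ => (n, k)

lemma swapVariation_nonneg (n k : ℕ) (h : List Bool → ℝ) : 0 ≤ swapVariation n k h := by
  induction n, k using ballot_induction generalizing h with
  | zero k => rw [swapVariation]
  | succ_zero n ih =>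
    rw [swapVariation]
    exact ih _
  | succ_succ n k ih₁ ih₂ =>
    rw [swapVariation]
    exact add_nonneg (add_nonneg (ih₁ _) (ih₂ _)) (sum_nonneg fun _ _ => abs_nonneg _)

lemma abs_add_div_sub_le {A B a b s m : ℝ} (ha : 0 < a) (hb : 0 < b) (hm : 0 < m) (hs : 0 ≤ s)
    (h : |A / a - B / b| ≤ s / m) (hab : a * b ≤ (a + b) * m) :
    |(A + B) / (a + b) - B / b| ≤ s / b := by
  have hfac : (A + B) / (a + b) - B / b = a / (a + b) * (A / a - B / b) := by
    field_simp
    ring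
  rw [hfac, abs_mul, abs_of_pos (by positivity : 0 < a / (a + b))]
  calc a / (a + b) * |A / a - B / b| ≤ a / (a + b) * (s / m) := by gcongr
    _ = (a * b) * s / ((a + b) * m * b) := by field_simp
    _ ≤ ((a + b) * m) * s / ((a + b) * m * b) := by gcongr
    _ = s / b := by field_simp

lemma abs_expect_false_sub_expect_true_le_of_le_of_le {n k : ℕ}
    (hfalse : ∀ h : List Bool → ℝ,
      |𝔼 w ∈ ballotWords (n + 1) k, h w - 𝔼 w ∈ ballotWords n (k + 1), h (true :: w)|
        ≤ swapVariation (n + 1) k h / #(ballotWords n (k + 1)))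
    (htrue : ∀ h : List Bool → ℝ,
      |𝔼 w ∈ ballotWords n (k + 2), h w - 𝔼 w ∈ ballotWords n (k + 1), h (false :: w)|
        ≤ swapVariation n (k + 2) h / #(ballotWords n (k + 1)))
    (h : List Bool → ℝ) :
    |𝔼 w ∈ ballotWords (n + 1) k, h (false :: w) - 𝔼 w ∈ ballotWords n (k + 2), h (true :: w)|
      ≤ swapVariation (n + 1) (k + 1) h / #(ballotWords n (k + 1)) := by
  have hswap : |𝔼 w ∈ ballotWords n (k + 1), h (false :: true :: w)
        - 𝔼 w ∈ ballotWords n (k + 1), h (true :: false :: w)|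
      ≤ (∑ w ∈ ballotWords n (k + 1), |h (false :: true :: w) - h (true :: false :: w)|)
        / #(ballotWords n (k + 1)) := by
    rw [← expect_sub_distrib, ← expect_eq_sum_div_card]
    exact abs_expect_le _ _
  rw [swapVariation, add_div, add_div]
  have h₁ := abs_le.mp (hfalse fun w => h (false :: w))
  have h₂ := abs_le.mp (htrue fun w => h (true :: w))
  have h₃ := abs_le.mp hswap
  exact abs_le.mpr ⟨by linarith, by linarith⟩

lemma card_mul_card_le_add_mul_card (n k : ℕ) :
    (#(ballotWords (n + 1) k) * #(ballotWords n (k + 2)) : ℝ)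
      ≤ (#(ballotWords (n + 1) k) + #(ballotWords n (k + 2))) * #(ballotWords n (k + 1)) := by
  have h := card_ballotWords_mul_le n k
  rw [card_ballotWords_succ_succ] at h
  exact_mod_cast h

lemma abs_expect_sub_expect_true_le_of_le {n : ℕ}
    (hfalse : ∀ k, ∀ h : List Bool → ℝ,
      |𝔼 w ∈ ballotWords n (k + 1), h w - 𝔼 w ∈ ballotWords n k, h (false :: w)|
        ≤ swapVariation n (k + 1) h / #(ballotWords n k))
    (k : ℕ) (h : List Bool → ℝ) :
    |𝔼 w ∈ ballotWords (n + 1) k, h w - 𝔼 w ∈ ballotWords n (k + 1), h (true :: w)|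
      ≤ swapVariation (n + 1) k h / #(ballotWords n (k + 1)) := by
  induction k generalizing h with
  | zero =>
    simp only [expect_eq_sum_div_card, sum_ballotWords_succ_zero, card_ballotWords_succ_zero]
    rw [sub_self, abs_zero]
    exact div_nonneg (swapVariation_nonneg _ _ _) (Nat.cast_nonneg _)
  | succ k ih =>
    have hslice := abs_expect_false_sub_expect_true_le_of_le_of_le ih (hfalse (k + 1)) h
    simp only [expect_eq_sum_div_card] at hslice ⊢
    rw [sum_ballotWords_succ_succ, card_ballotWords_succ_succ, Nat.cast_add]
    exact abs_add_div_sub_le (cast_card_ballotWords_pos _ _) (cast_card_ballotWords_pos _ _)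
      (cast_card_ballotWords_pos _ _) (swapVariation_nonneg _ _ _) hslice
      (card_mul_card_le_add_mul_card n k)

lemma abs_expect_sub_expect_false_le (n k : ℕ) (h : List Bool → ℝ) :
    |𝔼 w ∈ ballotWords n (k + 1), h w - 𝔼 w ∈ ballotWords n k, h (false :: w)|
      ≤ swapVariation n (k + 1) h / #(ballotWords n k) := by
  induction n generalizing k h with
  | zero =>
    simp only [expect_eq_sum_div_card, sum_ballotWords_zero, card_ballotWords_zero,
      List.replicate_succ, sub_self, abs_zero]
    exact div_nonneg (swapVariation_nonneg _ _ _) (Nat.cast_nonneg _)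
  | succ n ih =>
    have hslice := abs_expect_false_sub_expect_true_le_of_le_of_le
      (abs_expect_sub_expect_true_le_of_le ih k) (ih (k + 1)) h
    rw [abs_sub_comm] at hslice
    simp only [expect_eq_sum_div_card] at hslice ⊢
    rw [sum_ballotWords_succ_succ, card_ballotWords_succ_succ, Nat.cast_add, add_comm (∑ _ ∈ _, _),
      add_comm (#_ : ℝ)]
    exact abs_add_div_sub_le (cast_card_ballotWords_pos _ _) (cast_card_ballotWords_pos _ _)
      (cast_card_ballotWords_pos _ _) (swapVariation_nonneg _ _ _) hslice
      (by linarith [card_mul_card_le_add_mul_card n k])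

lemma abs_expect_false_sub_expect_true_le (n k : ℕ) (h : List Bool → ℝ) :
    |𝔼 w ∈ ballotWords (n + 1) k, h (false :: w) - 𝔼 w ∈ ballotWords n (k + 2), h (true :: w)|
      ≤ swapVariation (n + 1) (k + 1) h / #(ballotWords n (k + 1)) :=
  abs_expect_false_sub_expect_true_le_of_le_of_le
    (abs_expect_sub_expect_true_le_of_le (abs_expect_sub_expect_false_le n) k)
    (abs_expect_sub_expect_false_le n (k + 1)) h

/-! ### Flips of ballot paths -/

/-- Insert a down-step at the first time the path lies `d` below its starting height; the value is
junk if there is no such time. -/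
def insertDown : ℕ → List Bool → List Bool
  | 0, w => false :: w
  | _ + 1, [] => []
  | d + 1, false :: w => false :: insertDown d w
  | d + 1, true :: w => true :: insertDown (d + 2) w

/-- The ordered pairs of ballot paths encoding a diagonal flip: a down-step followed by an up-step
is postponed until the excursion above its endpoint that starts with this up-step is over. -/
def flipPairs : ℕ → ℕ → Finset (List Bool × List Bool)
  | 0, _ => ∅
  | n + 1, 0 => (flipPairs n 1).image (Prod.map (List.cons true) (List.cons true))
  | n + 1, k + 1 => (flipPairs (n + 1) k).image (Prod.map (List.cons false) (List.cons false)) ∪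
      ((flipPairs n (k + 2)).image (Prod.map (List.cons true) (List.cons true)) ∪
        (ballotWords n (k + 1)).image fun v => (false :: true :: v, true :: insertDown 1 v))
termination_by n k => (n, k)

lemma flipPairs_zero (k : ℕ) : flipPairs 0 k = ∅ := by
  rw [flipPairs]

lemma flipPairs_succ_zero (n : ℕ) : flipPairs (n + 1) 0
    = (flipPairs n 1).image (Prod.map (List.cons true) (List.cons true)) := by
  rw [flipPairs]

lemma flipPairs_succ_succ (n k : ℕ) : flipPairs (n + 1) (k + 1)
    = (flipPairs (n + 1) k).image (Prod.map (List.cons false) (List.cons false)) ∪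
      ((flipPairs n (k + 2)).image (Prod.map (List.cons true) (List.cons true)) ∪
        (ballotWords n (k + 1)).image fun v => (false :: true :: v, true :: insertDown 1 v)) := by
  rw [flipPairs]

section FlipSums

variable {M : Type*} [AddCommMonoid M]

lemma sum_flipPairs_succ_zero (n : ℕ) (f : List Bool × List Bool → M) :
    ∑ p ∈ flipPairs (n + 1) 0, f p = ∑ p ∈ flipPairs n 1, f (true :: p.1, true :: p.2) := by
  rw [flipPairs_succ_zero,
    sum_image (List.cons_injective.prodMap List.cons_injective).injOn]
  rfl

lemma sum_flipPairs_succ_succ (n k : ℕ) (f : List Bool × List Bool → M) :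
    ∑ p ∈ flipPairs (n + 1) (k + 1), f p
      = ∑ p ∈ flipPairs (n + 1) k, f (false :: p.1, false :: p.2)
        + (∑ p ∈ flipPairs n (k + 2), f (true :: p.1, true :: p.2)
          + ∑ v ∈ ballotWords n (k + 1), f (false :: true :: v, true :: insertDown 1 v)) := by
  have hinj (b : Bool) : Function.Injective (Prod.map (List.cons b) (List.cons b)) :=
    List.cons_injective.prodMap List.cons_injective
  rw [flipPairs_succ_succ, sum_union, sum_union, sum_image (hinj _).injOn,
    sum_image (hinj _).injOn, sum_image (by simp +contextual [Set.InjOn])]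
  · rfl
  all_goals
    simp only [disjoint_left, mem_union, mem_image, Prod.exists, Prod.map, Prod.forall,
      Prod.mk.injEq]
    rintro _ _ ⟨a, b, -, rfl, rfl⟩
    simp

end FlipSums

lemma insertDown_replicate {d k : ℕ} (hd : d ≤ k) :
    insertDown d (List.replicate k false) = List.replicate (k + 1) false := by
  induction d generalizing k with
  | zero => rw [insertDown, List.replicate_succ]
  | succ d ih =>
    obtain ⟨k, rfl⟩ := Nat.exists_eq_add_of_lt hd
    rw [show d + k + 1 = (d + k) + 1 from rfl, List.replicate_succ, insertDown, ih (by omega),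
      ← List.replicate_succ]

lemma sum_insertDown_le {n k d : ℕ} (hd : d ≤ k) {φ : List Bool → ℝ} (hφ : ∀ w, 0 ≤ φ w) :
    ∑ v ∈ ballotWords n k, φ (insertDown d v) ≤ ∑ w ∈ ballotWords n (k + 1), φ w := by
  induction n, k using ballot_induction generalizing d φ with
  | zero k => rw [sum_ballotWords_zero, sum_ballotWords_zero, insertDown_replicate hd]
  | succ_zero n =>
    obtain rfl : d = 0 := by omega
    simp only [insertDown, sum_ballotWords_succ_succ]
    exact le_add_of_nonneg_right (sum_nonneg fun _ _ => hφ _)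
  | succ_succ n k ih₁ ih₂ =>
    rcases d with _ | d
    · simp only [insertDown, sum_ballotWords_succ_succ n (k + 1)]
      exact le_add_of_nonneg_right (sum_nonneg fun _ _ => hφ _)
    · rw [sum_ballotWords_succ_succ, sum_ballotWords_succ_succ]
      exact add_le_add (ih₁ (φ := fun w => φ (false :: w)) (by omega) fun _ => hφ _)
        (ih₂ (φ := fun w => φ (true :: w)) (by omega) fun _ => hφ _)

lemma sum_flipPairs_fst_le (n k : ℕ) {φ : List Bool → ℝ} (hφ : ∀ w, 0 ≤ φ w) :
    ∑ p ∈ flipPairs n k, φ p.1 ≤ n * ∑ w ∈ ballotWords n k, φ w := by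
  induction n generalizing k φ with
  | zero => simp [flipPairs_zero]
  | succ n ih =>
    suffices hstrong : ∑ p ∈ flipPairs (n + 1) k, φ p.1 + ∑ v ∈ ballotWords n (k + 1), φ (true :: v)
        ≤ (n + 1) * ∑ w ∈ ballotWords (n + 1) k, φ w by
      push_cast
      linarith [sum_nonneg fun v (_ : v ∈ ballotWords n (k + 1)) => hφ (true :: v)]
    induction k generalizing φ with
    | zero =>
      rw [sum_flipPairs_succ_zero, sum_ballotWords_succ_zero]
      linarith [ih 1 (φ := fun w => φ (true :: w)) fun _ => hφ _]
    | succ k ihk =>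
      rw [sum_flipPairs_succ_succ, sum_ballotWords_succ_succ n k]
      linarith [ih (k + 2) (φ := fun w => φ (true :: w)) fun _ => hφ _,
        ihk (φ := fun w => φ (false :: w)) fun _ => hφ _]

lemma sum_flipPairs_snd_le (n k : ℕ) {φ : List Bool → ℝ} (hφ : ∀ w, 0 ≤ φ w) :
    ∑ p ∈ flipPairs n k, φ p.2 ≤ n * ∑ w ∈ ballotWords n k, φ w := by
  induction n, k using ballot_induction generalizing φ with
  | zero k => simp [flipPairs_zero]
  | succ_zero n ih =>
    rw [sum_flipPairs_succ_zero, sum_ballotWords_succ_zero]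
    have h := ih (φ := fun w => φ (true :: w)) fun _ => hφ _
    push_cast
    linarith [sum_nonneg fun w (_ : w ∈ ballotWords n 1) => hφ (true :: w)]
  | succ_succ n k ih₁ ih₂ =>
    rw [sum_flipPairs_succ_succ, sum_ballotWords_succ_succ]
    have hfalse := ih₁ (φ := fun w => φ (false :: w)) fun _ => hφ _
    have htrue := ih₂ (φ := fun w => φ (true :: w)) fun _ => hφ _
    have hins := sum_insertDown_le (n := n) (show 1 ≤ k + 1 by omega) fun w => hφ (true :: w)
    push_cast at *
    linarith

/-- The variation of `h` along all flips. -/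
noncomputable def flipVariation (n k : ℕ) (h : List Bool → ℝ) : ℝ :=
  ∑ p ∈ flipPairs n k, |h p.1 - h p.2|

lemma flipVariation_zero (k : ℕ) (h : List Bool → ℝ) : flipVariation 0 k h = 0 := by
  rw [flipVariation, flipPairs_zero, sum_empty]

lemma flipVariation_succ_zero (n : ℕ) (h : List Bool → ℝ) :
    flipVariation (n + 1) 0 h = flipVariation n 1 fun w => h (true :: w) :=
  sum_flipPairs_succ_zero n _

lemma flipVariation_succ_succ (n k : ℕ) (h : List Bool → ℝ) :
    flipVariation (n + 1) (k + 1) h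
      = flipVariation (n + 1) k (fun w => h (false :: w))
        + (flipVariation n (k + 2) (fun w => h (true :: w))
          + ∑ v ∈ ballotWords n (k + 1), |h (false :: true :: v) - h (true :: insertDown 1 v)|) :=
  sum_flipPairs_succ_succ n k _

/-- The variation of `h` along the flips that postpone the record down-step reaching for the first
time the height `d + 1` below the start. -/
def recordVariation : ℕ → ℕ → ℕ → (List Bool → ℝ) → ℝ
  | 0, _, _, _ => 0
  | _ + 1, 0, _, _ => 0
  | n + 1, k + 1, 0, h =>
    ∑ v ∈ ballotWords n (k + 1), |h (false :: true :: v) - h (true :: insertDown 1 v)|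
      + recordVariation n (k + 2) 1 (fun w => h (true :: w))
  | n + 1, k + 1, d + 1, h => recordVariation (n + 1) k d (fun w => h (false :: w))
      + recordVariation n (k + 2) (d + 2) (fun w => h (true :: w))
termination_by n k _ _ => (n, k)

lemma recordVariation_nonneg (n k d : ℕ) (h : List Bool → ℝ) : 0 ≤ recordVariation n k d h := by
  induction n, k using ballot_induction generalizing d h with
  | zero k => rw [recordVariation]
  | succ_zero n => rw [recordVariation]
  | succ_succ n k ih₁ ih₂ =>
    rcases d with _ | d <;> rw [recordVariation]
    · exact add_nonneg (sum_nonneg fun _ _ => abs_nonneg _) (ih₂ _ _)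
    · exact add_nonneg (ih₁ _ _) (ih₂ _ _)

/-- The variation of `h` along the flips that postpone a down-step which is not a record. -/
def innerVariation : ℕ → ℕ → (List Bool → ℝ) → ℝ
  | 0, _, _ => 0
  | n + 1, 0, h => recordVariation n 1 0 (fun w => h (true :: w))
      + innerVariation n 1 (fun w => h (true :: w))
  | n + 1, k + 1, h => recordVariation n (k + 2) 0 (fun w => h (true :: w))
      + innerVariation (n + 1) k (fun w => h (false :: w))
      + innerVariation n (k + 2) (fun w => h (true :: w))
termination_by n k _ => (n, k)

lemma sum_abs_insertDown_sub_le {n k d : ℕ} (hd : d < k) (h : List Bool → ℝ) :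
    ∑ v ∈ ballotWords n k, |h (insertDown d v) - h (insertDown (d + 1) v)|
      ≤ recordVariation n (k + 1) d h := by
  induction n, k using ballot_induction generalizing d h with
  | zero k =>
    rw [sum_ballotWords_zero, insertDown_replicate hd.le, insertDown_replicate hd, sub_self,
      abs_zero, recordVariation]
  | succ_zero n => omega
  | succ_succ n k ih₁ ih₂ =>
    rw [sum_ballotWords_succ_succ]
    rcases d with _ | d
    · have htrue := ih₂ (d := 1) (by omega) fun w => h (true :: w)
      have htriangle := sum_le_sum fun v (_ : v ∈ ballotWords n (k + 2)) =>
        abs_sub_le (h (false :: true :: v)) (h (true :: insertDown 1 v))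
          (h (true :: insertDown 2 v))
      rw [sum_add_distrib] at htriangle
      simp only [insertDown, zero_add, sub_self, abs_zero, sum_const_zero, recordVariation]
      linarith
    · simp only [insertDown, recordVariation]
      exact add_le_add (ih₁ (by omega) fun w => h (false :: w))
        (ih₂ (by omega) fun w => h (true :: w))

lemma swapVariation_le_flipVariation_add (n k : ℕ) (h : List Bool → ℝ) :
    swapVariation n k h ≤ flipVariation n k h + innerVariation n k h := by
  induction n, k using ballot_induction generalizing h with
  | zero k => rw [swapVariation, flipVariation_zero, innerVariation, add_zero]
  | succ_zero n ih =>
    rw [swapVariation, flipVariation_succ_zero, innerVariation]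
    linarith [ih fun w => h (true :: w), recordVariation_nonneg n 1 0 fun w => h (true :: w)]
  | succ_succ n k ih₁ ih₂ =>
    have hfalse := ih₁ fun w => h (false :: w)
    have htrue := ih₂ fun w => h (true :: w)
    have hmove := sum_abs_insertDown_sub_le (n := n) k.succ_pos fun w => h (true :: w)
    have htriangle := sum_le_sum fun v (_ : v ∈ ballotWords n (k + 1)) =>
      abs_sub_le (h (false :: true :: v)) (h (true :: insertDown 1 v)) (h (true :: false :: v))
    simp only [insertDown, zero_add, abs_sub_comm (h (true :: false :: _))] at hmove
    rw [sum_add_distrib] at htriangle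
    rw [swapVariation, flipVariation_succ_succ, innerVariation]
    linarith

lemma innerVariation_add_sum_le (n k c : ℕ) (h : List Bool → ℝ) :
    innerVariation n k h + ∑ d ∈ range c, recordVariation n k d h ≤ flipVariation n k h := by
  induction n, k using ballot_induction generalizing c h with
  | zero k => simp [flipVariation_zero, innerVariation, recordVariation]
  | succ_zero n ih =>
    have htrue := ih 1 fun w => h (true :: w)
    simp only [sum_range_one] at htrue
    simp only [flipVariation_succ_zero, innerVariation, recordVariation, sum_const_zero, add_zero]
    linarith
  | succ_succ n k ih₁ ih₂ =>
    rw [flipVariation_succ_succ, innerVariation]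
    rcases c with _ | c
    · have hfalse := ih₁ 0 fun w => h (false :: w)
      have htrue := ih₂ 1 fun w => h (true :: w)
      have hnonneg : 0 ≤ ∑ v ∈ ballotWords n (k + 1),
          |h (false :: true :: v) - h (true :: insertDown 1 v)| :=
        sum_nonneg fun _ _ => abs_nonneg _
      simp only [sum_range_zero, sum_range_one] at hfalse htrue ⊢
      linarith
    · have hfalse := ih₁ c fun w => h (false :: w)
      have htrue := ih₂ (c + 2) fun w => h (true :: w)
      rw [sum_range_succ', sum_range_succ'] at htrue
      rw [sum_range_succ']
      simp only [recordVariation, sum_add_distrib]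
      simp only [zero_add, add_assoc, Nat.reduceAdd] at htrue ⊢
      linarith

lemma swapVariation_le (n k : ℕ) (h : List Bool → ℝ) :
    swapVariation n k h ≤ 2 * flipVariation n k h := by
  have hinner := innerVariation_add_sum_le n k 0 h
  rw [sum_range_zero] at hinner
  linarith [swapVariation_le_flipVariation_add n k h]

/-! ### The logarithmic Sobolev inequality -/

/-- The sum of the squared increments of `g` along all flips. -/
def flipEnergy (n k : ℕ) (g : List Bool → ℝ) : ℝ :=
  ∑ p ∈ flipPairs n k, (g p.1 - g p.2) ^ 2

lemma flipEnergy_nonneg (n k : ℕ) (g : List Bool → ℝ) : 0 ≤ flipEnergy n k g :=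
  sum_nonneg fun _ _ => sq_nonneg _

lemma flipEnergy_succ_zero (n : ℕ) (g : List Bool → ℝ) :
    flipEnergy (n + 1) 0 g = flipEnergy n 1 fun w => g (true :: w) :=
  sum_flipPairs_succ_zero n _

lemma flipEnergy_add_le (n k : ℕ) (g : List Bool → ℝ) :
    flipEnergy (n + 1) k (fun w => g (false :: w)) + flipEnergy n (k + 2) (fun w => g (true :: w))
      ≤ flipEnergy (n + 1) (k + 1) g := by
  rw [flipEnergy, flipEnergy, flipEnergy, sum_flipPairs_succ_succ, ← add_assoc]
  exact le_add_of_nonneg_right (sum_nonneg fun _ _ => sq_nonneg _)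

lemma sq_flipVariation_sq_le (n k : ℕ) (g : List Bool → ℝ) :
    flipVariation n k (fun w => g w ^ 2) ^ 2
      ≤ flipEnergy n k g * (4 * n * ∑ w ∈ ballotWords n k, g w ^ 2) := by
  have hfac : flipVariation n k (fun w => g w ^ 2)
      = ∑ p ∈ flipPairs n k, |g p.1 - g p.2| * |g p.1 + g p.2| :=
    sum_congr rfl fun p _ => by
      rw [← abs_mul]
      congr 1
      ring
  have hplus : ∑ p ∈ flipPairs n k, (g p.1 + g p.2) ^ 2
      ≤ 2 * ∑ p ∈ flipPairs n k, g p.1 ^ 2 + 2 * ∑ p ∈ flipPairs n k, g p.2 ^ 2 := by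
    rw [mul_sum, mul_sum, ← sum_add_distrib]
    exact sum_le_sum fun p _ => by nlinarith [sq_nonneg (g p.1 - g p.2)]
  have hfst := sum_flipPairs_fst_le n k fun w => sq_nonneg (g w)
  have hsnd := sum_flipPairs_snd_le n k fun w => sq_nonneg (g w)
  rw [hfac]
  refine (sum_mul_sq_le_sq_mul_sq _ _ _).trans ?_
  simp only [sq_abs]
  exact mul_le_mul_of_nonneg_left (by linarith) (flipEnergy_nonneg n k g)

lemma sq_expect_sub_expect_le (n k : ℕ) (g : List Bool → ℝ) :
    (𝔼 w ∈ ballotWords (n + 1) k, g (false :: w) ^ 2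
        - 𝔼 w ∈ ballotWords n (k + 2), g (true :: w) ^ 2) ^ 2
      ≤ 16 * (n + 1) * flipEnergy (n + 1) (k + 1) g / #(ballotWords n (k + 1)) ^ 2
        * ∑ w ∈ ballotWords (n + 1) (k + 1), g w ^ 2 := by
  have hflip := swapVariation_le (n + 1) (k + 1) fun w => g w ^ 2
  have hnonneg := swapVariation_nonneg (n + 1) (k + 1) fun w => g w ^ 2
  have hsq := sq_flipVariation_sq_le (n + 1) (k + 1) g
  rw [← sq_abs]
  calc _ ≤ (swapVariation (n + 1) (k + 1) (fun w => g w ^ 2) / #(ballotWords n (k + 1))) ^ 2 := by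
        gcongr
        exact abs_expect_false_sub_expect_true_le n k fun w => g w ^ 2
    _ ≤ (2 * flipVariation (n + 1) (k + 1) (fun w => g w ^ 2) / #(ballotWords n (k + 1))) ^ 2 := by
        gcongr
    _ = 4 * flipVariation (n + 1) (k + 1) (fun w => g w ^ 2) ^ 2
          / #(ballotWords n (k + 1)) ^ 2 := by
        ring
    _ ≤ 4 * (flipEnergy (n + 1) (k + 1) g
          * (4 * ↑(n + 1) * ∑ w ∈ ballotWords (n + 1) (k + 1), g w ^ 2))
          / #(ballotWords n (k + 1)) ^ 2 := by gcongr
    _ = _ := by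
        push_cast
        ring

lemma card_mul_card_mul_le (n k : ℕ) :
    (n + 1) * #(ballotWords (n + 1) k) * #(ballotWords n (k + 2))
      ≤ 4 * (2 * n + 2 + k) * #(ballotWords n (k + 1)) ^ 2 :=
  calc _ ≤ (2 * n + 2 + k) * #(ballotWords n (k + 1)) * (4 * #(ballotWords n (k + 1))) :=
        Nat.mul_le_mul (card_ballotWords_succ_left_le n k)
          (card_ballotWords_succ_right_le n (k + 1))
    _ = _ := by ring

lemma entropy_ballotWords_succ_succ_le (n k : ℕ) (g : List Bool → ℝ) :
    entropy (ballotWords (n + 1) (k + 1)) (fun w => g w ^ 2)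
      ≤ entropy (ballotWords (n + 1) k) (fun w => g (false :: w) ^ 2)
        + entropy (ballotWords n (k + 2)) (fun w => g (true :: w) ^ 2)
        + 64 * (2 * n + 2 + k) * flipEnergy (n + 1) (k + 1) g := by
  have hinj (b : Bool) : Function.Injective (List.cons b) := List.cons_injective
  have hdisj : Disjoint ((ballotWords (n + 1) k).image (List.cons false))
      ((ballotWords n (k + 2)).image (List.cons true)) := by simp [disjoint_left]
  have henergy := flipEnergy_nonneg (n + 1) (k + 1) g
  have hgap := sq_expect_sub_expect_le n k g
  have hpos := cast_card_ballotWords_pos n (k + 1)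
  have hcard : ((n + 1) * #(ballotWords (n + 1) k) * #(ballotWords n (k + 2)) : ℝ)
      ≤ 4 * (2 * n + 2 + k) * #(ballotWords n (k + 1)) ^ 2 := mod_cast card_mul_card_mul_le n k
  have hunion := entropy_union_le (f := fun w => g w ^ 2)
    (E := 16 * (n + 1) * flipEnergy (n + 1) (k + 1) g / #(ballotWords n (k + 1)) ^ 2) hdisj
    ((card_pos.mp (card_ballotWords_pos _ _)).image _)
    ((card_pos.mp (card_ballotWords_pos _ _)).image _)
    (fun _ => sq_nonneg _) (by positivity)
    (by
      rw [← sum_union hdisj, ← ballotWords_succ_succ]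
      simpa only [expect_image (hinj _).injOn] using hgap)
  rw [entropy_image (hinj _), entropy_image (hinj _), card_image_of_injective _ (hinj _),
    card_image_of_injective _ (hinj _), ← ballotWords_succ_succ] at hunion
  refine hunion.trans (add_le_add_right ?_ _)
  rw [mul_div_assoc', div_le_iff₀ (by positivity)]
  calc _ = 16 * flipEnergy (n + 1) (k + 1) g
          * ((n + 1) * #(ballotWords (n + 1) k) * #(ballotWords n (k + 2))) := by ring
    _ ≤ 16 * flipEnergy (n + 1) (k + 1) g
          * (4 * (2 * n + 2 + k) * #(ballotWords n (k + 1)) ^ 2) := by gcongr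
    _ = _ := by ring

theorem entropy_ballotWords_le (n k : ℕ) (g : List Bool → ℝ) :
    entropy (ballotWords n k) (fun w => g w ^ 2) ≤ 32 * (2 * n + k) ^ 2 * flipEnergy n k g := by
  induction n, k using ballot_induction generalizing g with
  | zero k =>
    have henergy := flipEnergy_nonneg 0 k g
    rw [ballotWords_zero, entropy, sum_singleton, sum_singleton, card_singleton, Nat.cast_one,
      div_one, sub_self]
    positivity
  | succ_zero n ih =>
    have henergy := flipEnergy_nonneg n 1 fun w => g (true :: w)
    rw [ballotWords_succ_zero, entropy_image List.cons_injective, flipEnergy_succ_zero]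
    refine (ih fun w => g (true :: w)).trans (mul_le_mul_of_nonneg_right ?_ henergy)
    push_cast
    nlinarith [(Nat.cast_nonneg n : (0 : ℝ) ≤ n)]
  | succ_succ n k ih₁ ih₂ =>
    have hfalse := ih₁ fun w => g (false :: w)
    have htrue := ih₂ fun w => g (true :: w)
    have henergy := flipEnergy_nonneg (n + 1) (k + 1) g
    have hsum : 32 * (2 * (n : ℝ) + k + 2) ^ 2 * (flipEnergy (n + 1) k (fun w => g (false :: w))
          + flipEnergy n (k + 2) (fun w => g (true :: w)))
        ≤ 32 * (2 * n + k + 2) ^ 2 * flipEnergy (n + 1) (k + 1) g :=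
      mul_le_mul_of_nonneg_left (flipEnergy_add_le n k g) (by positivity)
    push_cast at *
    linear_combination entropy_ballotWords_succ_succ_le n k g + hfalse + htrue + hsum + 32 * henergy

/-! ### Triangulations with integer vertices -/

/-- Two chords of a convex polygon whose vertices are labelled by natural numbers in cyclic order,
given with increasing endpoints, cross. -/
def Cross (p q : ℕ × ℕ) : Prop :=
  p.1 < q.1 ∧ q.1 < p.2 ∧ p.2 < q.2 ∨ q.1 < p.1 ∧ p.1 < q.2 ∧ q.2 < p.2

lemma Cross.symm {p q : ℕ × ℕ} (h : Cross p q) : Cross q p := Or.symm h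

lemma not_cross_self (p : ℕ × ℕ) : ¬Cross p p := by
  simp [Cross]

/-- `R` is the set of chords, with increasing endpoints and including the sides, of a triangulation
of the convex polygon with vertex set `Q`. -/
def IsTriang (Q : Set ℕ) (R : Finset (ℕ × ℕ)) : Prop :=
  ∀ p, p ∈ R ↔ p.1 < p.2 ∧ p.1 ∈ Q ∧ p.2 ∈ Q ∧ ∀ q ∈ R, ¬Cross p q

namespace IsTriang

variable {Q : Set ℕ} {R : Finset (ℕ × ℕ)}

lemma lt (hR : IsTriang Q R) {a b : ℕ} (h : (a, b) ∈ R) : a < b := ((hR _).1 h).1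

lemma left_mem (hR : IsTriang Q R) {a b : ℕ} (h : (a, b) ∈ R) : a ∈ Q := ((hR _).1 h).2.1

lemma right_mem (hR : IsTriang Q R) {a b : ℕ} (h : (a, b) ∈ R) : b ∈ Q := ((hR _).1 h).2.2.1

lemma not_cross (hR : IsTriang Q R) {p q : ℕ × ℕ} (hp : p ∈ R) (hq : q ∈ R) : ¬Cross p q :=
  ((hR p).1 hp).2.2.2 q hq

lemma eq_of_subset {S : Finset (ℕ × ℕ)} (hR : IsTriang Q R) (hS : IsTriang Q S) (h : R ⊆ S) :
    R = S :=
  h.antisymm fun p hp =>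
    have hp' := (hS p).1 hp
    (hR p).2 ⟨hp'.1, hp'.2.1, hp'.2.2.1, fun _ hq => hp'.2.2.2 _ (h hq)⟩

lemma side_mem (hR : IsTriang Q R) {y z : ℕ} (hyz : y < z) (hy : y ∈ Q) (hz : z ∈ Q)
    (hgap : ∀ q ∈ Q, ¬(y < q ∧ q < z)) : (y, z) ∈ R :=
  (hR _).2 ⟨hyz, hy, hz, fun _ hq hc => hc.elim
    (fun h => hgap _ (hR.left_mem hq) ⟨h.1, h.2.1⟩)
    (fun h => hgap _ (hR.right_mem hq) h.2)⟩

end IsTriang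

/-- The new vertex `x` can be attached to the polygon `Q` as an ear over the side `(y, z)`. -/
structure IsEar (Q : Set ℕ) (y x z : ℕ) : Prop where
  lt_apex : y < x
  apex_lt : x < z
  left_mem : y ∈ Q
  right_mem : z ∈ Q
  gap : ∀ q ∈ Q, ¬(y < q ∧ q < z)

namespace IsEar

variable {Q : Set ℕ} {R : Finset (ℕ × ℕ)} {x y z : ℕ}

lemma apex_notMem (h : IsEar Q y x z) : x ∉ Q := fun hx => h.gap x hx ⟨h.lt_apex, h.apex_lt⟩

lemma not_cross_left (h : IsEar Q y x z) {p : ℕ × ℕ} (h₁ : p.1 ∈ Q) (h₂ : p.2 ∈ Q) :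
    ¬Cross p (y, x) := by
  have := h.gap _ h₁
  have := h.gap _ h₂
  have := h.apex_lt
  simp only [Cross]
  omega

lemma not_cross_right (h : IsEar Q y x z) {p : ℕ × ℕ} (h₁ : p.1 ∈ Q) (h₂ : p.2 ∈ Q) :
    ¬Cross p (x, z) := by
  have := h.gap _ h₁
  have := h.gap _ h₂
  have := h.lt_apex
  simp only [Cross]
  omega

lemma not_cross_left_right : ¬Cross (y, x) (x, z) := by
  simp only [Cross]
  omega

lemma eq_or_eq_of_apex (h : IsEar Q y x z) {p : ℕ × ℕ} (hlt : p.1 < p.2) (h₁ : p.1 ∈ insert x Q)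
    (h₂ : p.2 ∈ insert x Q) (hp : ¬(p.1 ∈ Q ∧ p.2 ∈ Q)) (hcross : ¬Cross p (y, z)) :
    p = (y, x) ∨ p = (x, z) := by
  have := h.lt_apex
  have := h.apex_lt
  obtain ⟨a, b⟩ := p
  simp only [Cross, Prod.mk.injEq] at *
  rcases h₁ with h₁ | h₁ <;> rcases h₂ with h₂ | h₂
  · omega
  · have := h.gap b h₂
    omega
  · have := h.gap a h₁
    omega
  · exact absurd ⟨h₁, h₂⟩ hp

lemma isTriang_insert (h : IsEar Q y x z) (hR : IsTriang Q R) :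
    IsTriang (insert x Q) (insert (y, x) (insert (x, z) R)) := by
  have hyz := hR.side_mem (h.lt_apex.trans h.apex_lt) h.left_mem h.right_mem h.gap
  intro p
  simp only [mem_insert, forall_eq_or_imp]
  constructor
  · rintro (rfl | rfl | hp)
    · exact ⟨h.lt_apex, .inr h.left_mem, .inl rfl, not_cross_self _, not_cross_left_right,
        fun q hq hc => h.not_cross_left (hR.left_mem hq) (hR.right_mem hq) hc.symm⟩
    · exact ⟨h.apex_lt, .inl rfl, .inr h.right_mem, fun hc => not_cross_left_right hc.symm,
        not_cross_self _,
        fun q hq hc => h.not_cross_right (hR.left_mem hq) (hR.right_mem hq) hc.symm⟩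
    · have h₁ := hR.left_mem hp
      have h₂ := hR.right_mem hp
      exact ⟨hR.lt hp, .inr h₁, .inr h₂, h.not_cross_left h₁ h₂, h.not_cross_right h₁ h₂,
        fun q hq => hR.not_cross hp hq⟩
  · rintro ⟨hlt, h₁, h₂, -, -, hcross⟩
    by_cases hp : p.1 ∈ Q ∧ p.2 ∈ Q
    · exact .inr (.inr ((hR p).2 ⟨hlt, hp.1, hp.2, hcross⟩))
    · exact (h.eq_or_eq_of_apex hlt h₁ h₂ hp (hcross _ hyz)).imp_right .inl

lemma exists_isTriang_of_mem (h : IsEar Q y x z) (hR : IsTriang (insert x Q) R)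
    (hyz : (y, z) ∈ R) :
    ∃ S, IsTriang Q S ∧ R = insert (y, x) (insert (x, z) S) := by
  classical
  have hgap (q : ℕ) (hq : q ∈ insert x Q) : q = x ∨ ¬(y < q ∧ q < z) := hq.imp_right (h.gap q)
  have hyx : (y, x) ∈ R := hR.side_mem h.lt_apex (.inr h.left_mem) (.inl rfl) fun q hq => by
    have := hgap q hq
    have := h.apex_lt
    omega
  have hxz : (x, z) ∈ R := hR.side_mem h.apex_lt (.inl rfl) (.inr h.right_mem) fun q hq => by
    have := hgap q hq
    have := h.lt_apex
    omega
  have hsplit (p : ℕ × ℕ) (hp : p ∈ R) : p = (y, x) ∨ p = (x, z) ∨ p.1 ∈ Q ∧ p.2 ∈ Q := by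
    by_cases hpQ : p.1 ∈ Q ∧ p.2 ∈ Q
    · exact .inr (.inr hpQ)
    · exact (h.eq_or_eq_of_apex (hR.lt hp) (hR.left_mem hp) (hR.right_mem hp) hpQ
        (hR.not_cross hp hyz)).imp_right .inl
  refine ⟨R.filter fun p => p.1 ∈ Q ∧ p.2 ∈ Q, fun p => ?_, ?_⟩
  · rw [mem_filter]
    refine ⟨fun ⟨hp, h₁, h₂⟩ => ⟨hR.lt hp, h₁, h₂, fun q hq =>
      hR.not_cross hp (mem_filter.1 hq).1⟩, fun ⟨hlt, h₁, h₂, hcross⟩ =>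
      ⟨(hR p).2 ⟨hlt, .inr h₁, .inr h₂, fun q hq => ?_⟩, h₁, h₂⟩⟩
    rcases hsplit q hq with rfl | rfl | hqQ
    · exact h.not_cross_left h₁ h₂
    · exact h.not_cross_right h₁ h₂
    · exact hcross q (mem_filter.2 ⟨hq, hqQ⟩)
  · ext p
    simp only [mem_insert, mem_filter]
    constructor
    · intro hp
      have := hsplit p hp
      tauto
    · rintro (rfl | rfl | hp)
      exacts [hyx, hxz, hp.1]

lemma insert_inj {S : Finset (ℕ × ℕ)} (h : IsEar Q y x z) (hR : IsTriang Q R) (hS : IsTriang Q S)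
    (heq : insert (y, x) (insert (x, z) R) = insert (y, x) (insert (x, z) S)) : R = S := by
  refine hR.eq_of_subset hS fun p hp => ?_
  have hpS : p ∈ insert (y, x) (insert (x, z) S) := heq ▸ mem_insert_of_mem (mem_insert_of_mem hp)
  rcases mem_insert.1 hpS with rfl | hpS
  · exact absurd (hR.right_mem hp) h.apex_notMem
  rcases mem_insert.1 hpS with rfl | hpS
  · exact absurd (hR.left_mem hp) h.apex_notMem
  · exact hpS

end IsEar

/-! ### Coding of triangulations by ballot paths -/

lemma nil_mem_ballotWords {n k : ℕ} : [] ∈ ballotWords n k ↔ n = 0 ∧ k = 0 := by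
  rcases n with _ | n <;> rcases k with _ | k <;>
    simp [ballotWords_zero, ballotWords_succ_zero, ballotWords_succ_succ, List.replicate_succ]

lemma true_cons_mem_ballotWords {n k : ℕ} {w : List Bool} :
    true :: w ∈ ballotWords n k ↔ ∃ m, n = m + 1 ∧ w ∈ ballotWords m (k + 1) := by
  rcases n with _ | n <;> rcases k with _ | k <;>
    simp [ballotWords_zero, ballotWords_succ_zero, ballotWords_succ_succ, List.replicate_succ]

lemma false_cons_mem_ballotWords {n k : ℕ} {w : List Bool} :
    false :: w ∈ ballotWords n k ↔ ∃ l, k = l + 1 ∧ w ∈ ballotWords n l := by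
  rcases n with _ | n <;> rcases k with _ | k <;>
    simp [ballotWords_zero, ballotWords_succ_zero, ballotWords_succ_succ, List.replicate_succ]

/-- The triangulation encoded by a ballot path, read by a sweep through the vertices. The vertices
up to `c` have been met, and those still visible from `c + 1` form the stack `x :: st`, topmost
first. An up-step pushes `c + 1`; a down-step cuts off the triangle `(y, x, c + 1)`, where `y` is
the stack entry below `x`, and pops `x`. The value is junk if the stack is exhausted early. -/
def chordsOfWord : List Bool → ℕ → ℕ → List ℕ → Finset (ℕ × ℕ)
  | [], c, x, _ => {(x, c + 1)}
  | true :: w, c, x, st => chordsOfWord w (c + 1) (c + 1) (x :: st)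
  | false :: w, c, x, y :: st => insert (y, x) (insert (x, c + 1) (chordsOfWord w c y st))
  | false :: _, _, _, [] => ∅

/-- The vertices of the polygon which remains to be triangulated by the sweep at stage `c` with
stack `st`, inside the polygon with vertices `0, …, n + 1`. -/
def sweepPolygon (n c : ℕ) (st : List ℕ) : Set ℕ := {q | q ∈ st ∨ c < q ∧ q ≤ n + 1}

/-- `x :: st` is a possible stack of visible vertices once the vertices up to `c` have been met. -/
structure IsStack (c x : ℕ) (st : List ℕ) : Prop where
  le : x ≤ c
  sorted : (x :: st).Pairwise (· > ·)

namespace IsStack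

variable {c x y : ℕ} {st : List ℕ}

lemma lt_top (h : IsStack c x st) {z : ℕ} (hz : z ∈ st) : z < x :=
  List.rel_of_pairwise_cons h.sorted hz

lemma le_top (h : IsStack c x st) {z : ℕ} (hz : z ∈ x :: st) : z ≤ x :=
  (List.mem_cons.1 hz).elim le_of_eq fun hz => (h.lt_top hz).le

lemma push (h : IsStack c x st) : IsStack (c + 1) (c + 1) (x :: st) where
  le := le_rfl
  sorted := List.pairwise_cons.2 ⟨fun _ hz => Nat.lt_succ_of_le ((h.le_top hz).trans h.le),
    h.sorted⟩

lemma pop (h : IsStack c x (y :: st)) : IsStack c y st where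
  le := (h.lt_top List.mem_cons_self).le.trans h.le
  sorted := h.sorted.of_cons

lemma isEar {n : ℕ} (h : IsStack c x (y :: st)) (hcn : c ≤ n) :
    IsEar (sweepPolygon n c (y :: st)) y x (c + 1) where
  lt_apex := h.lt_top List.mem_cons_self
  apex_lt := Nat.lt_succ_of_le h.le
  left_mem := .inl List.mem_cons_self
  right_mem := .inr ⟨Nat.lt_succ_self c, by omega⟩
  gap q hq := by
    rcases hq with hq | hq
    · have := h.pop.le_top hq
      omega
    · omega

end IsStack

lemma sweepPolygon_cons (n c x : ℕ) (st : List ℕ) :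
    sweepPolygon n c (x :: st) = insert x (sweepPolygon n c st) := by
  ext q
  simp [sweepPolygon, or_assoc]

lemma sweepPolygon_push {n c : ℕ} (hcn : c < n) (st : List ℕ) :
    sweepPolygon n (c + 1) ((c + 1) :: st) = sweepPolygon n c st := by
  ext q
  simp only [sweepPolygon, List.mem_cons, Set.mem_ofPred_eq]
  have : q = c + 1 ∨ c + 1 < q ∧ q ≤ n + 1 ↔ c < q ∧ q ≤ n + 1 := by omega
  tauto

/-- `R` triangulates the polygon left by the sweep at stage `c`, and no chord of `R` between
vertices which the sweep has met hides a vertex of the stack `x :: st`. -/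
structure Compatible (n c x : ℕ) (st : List ℕ) (R : Finset (ℕ × ℕ)) : Prop where
  isTriang : IsTriang (sweepPolygon n c (x :: st)) R
  visible : ∀ a b, (a, b) ∈ R → b ≤ c → ∀ z ∈ x :: st, ¬(a < z ∧ z < b)

namespace Compatible

variable {n c x y : ℕ} {st : List ℕ} {R : Finset (ℕ × ℕ)}

lemma singleton (h : IsStack n x []) : Compatible n n x [] {(x, n + 1)} where
  isTriang p := by
    obtain ⟨a, b⟩ := p
    have := h.le
    simp only [sweepPolygon, mem_singleton, Prod.mk.injEq, List.mem_singleton, Set.mem_ofPred_eq,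
      forall_eq, Cross]
    omega
  visible := by
    simp only [mem_singleton, Prod.mk.injEq]
    omega

lemma eq_singleton (hR : Compatible n n x [] R) (h : IsStack n x []) : R = {(x, n + 1)} :=
  (((singleton h).isTriang.eq_of_subset hR.isTriang) (singleton_subset_iff.2
    (hR.isTriang.side_mem (Nat.lt_succ_of_le h.le) (.inl List.mem_cons_self)
      (.inr ⟨Nat.lt_succ_self n, le_rfl⟩) fun q hq => by
        simp only [sweepPolygon, List.mem_singleton, Set.mem_ofPred_eq] at hq
        omega))).symm

lemma of_push (hR : Compatible n (c + 1) (c + 1) (x :: st) R) (hcn : c < n) :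
    Compatible n c x st R where
  isTriang := sweepPolygon_push hcn (x :: st) ▸ hR.isTriang
  visible a b hab hb z hz := hR.visible a b hab (hb.trans c.le_succ) z (List.mem_cons_of_mem _ hz)

lemma notMem_of_push (hR : Compatible n (c + 1) (c + 1) (x :: y :: st) R)
    (h : IsStack c x (y :: st)) : (y, c + 1) ∉ R := fun hy =>
  hR.visible y (c + 1) hy le_rfl x (by simp)
    ⟨h.lt_top List.mem_cons_self, Nat.lt_succ_of_le h.le⟩

/-- A chord which crosses `(y, c + 1)` either hides `y` or starts at the top `x` of the stack. -/
lemma pop_mem (hR : Compatible n c x (y :: st) R) (hcn : c ≤ n) (h : IsStack c x (y :: st))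
    (hx : ∀ z, c + 1 < z → (x, z) ∉ R) : (y, c + 1) ∈ R := by
  have ear := h.isEar hcn
  refine (hR.isTriang _).2 ⟨ear.lt_apex.trans ear.apex_lt, .inl (by simp), .inr (by omega), ?_⟩
  rintro ⟨a, b⟩ hab (⟨hya, hac, hcb⟩ | ⟨hay, hyb, hbc⟩)
  · have ha := hR.isTriang.left_mem hab
    rw [sweepPolygon_cons] at ha
    rcases ha with rfl | ha
    · exact hx b hcb hab
    · exact ear.gap a ha ⟨hya, hac⟩
  · exact hR.visible a b hab (Nat.le_of_lt_succ hbc) y (by simp) ⟨hay, hyb⟩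

lemma push_nil (hR : Compatible n c x [] R) (hcn : c < n) (h : IsStack c x []) :
    Compatible n (c + 1) (c + 1) [x] R where
  isTriang := (sweepPolygon_push hcn [x]).symm ▸ hR.isTriang
  visible a b hab hb z hz hz' := by
    have ha := hR.isTriang.left_mem hab
    have := h.le
    simp only [sweepPolygon, List.mem_cons, List.not_mem_nil, or_false, Set.mem_ofPred_eq] at ha hz
    omega

lemma push_cons (hR : Compatible n c x (y :: st) R) (hcn : c < n) (h : IsStack c x (y :: st))
    (hy : (y, c + 1) ∉ R) : Compatible n (c + 1) (c + 1) (x :: y :: st) R where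
  isTriang := (sweepPolygon_push hcn (x :: y :: st)).symm ▸ hR.isTriang
  visible a b hab hb z hz hz' := by
    have hzc : z ∈ x :: y :: st := by
      rcases List.mem_cons.1 hz with rfl | hz
      · omega
      · exact hz
    rcases Nat.lt_or_eq_of_le hb with hb | rfl
    · exact hR.visible a b hab (Nat.le_of_lt_succ hb) z hzc hz'
    · refine hy (hR.pop_mem hcn.le h fun e he hxe => hR.isTriang.not_cross hab hxe ?_)
      exact .inl ⟨hz'.1.trans_le (h.le_top hzc), Nat.lt_succ_of_le h.le, he⟩

lemma pop_iff (hcn : c ≤ n) (h : IsStack c x (y :: st)) :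
    Compatible n c x (y :: st) R ∧ (y, c + 1) ∈ R ↔
      ∃ S, Compatible n c y st S ∧ R = insert (y, x) (insert (x, c + 1) S) := by
  have ear := h.isEar hcn
  constructor
  · rintro ⟨hR, hy⟩
    obtain ⟨S, hS, rfl⟩ := ear.exists_isTriang_of_mem (sweepPolygon_cons .. ▸ hR.isTriang) hy
    exact ⟨S, ⟨hS, fun a b hab hb z hz => hR.visible a b (by simp [hab]) hb z (by simp [hz])⟩, rfl⟩
  · rintro ⟨S, hS, rfl⟩
    refine ⟨⟨sweepPolygon_cons n c x (y :: st) ▸ ear.isTriang_insert hS.isTriang, ?_⟩, ?_⟩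
    · simp only [mem_insert, Prod.mk.injEq]
      rintro a b (⟨rfl, rfl⟩ | ⟨rfl, rfl⟩ | hab) hb z hz hzab
      · exact ear.gap z (.inl ((List.mem_cons.1 hz).resolve_left hzab.2.ne))
          ⟨hzab.1, hzab.2.trans ear.apex_lt⟩
      · omega
      · rcases List.mem_cons.1 hz with rfl | hz
        · rcases hS.isTriang.right_mem hab with hb' | hb'
          · exact (h.lt_top hb').not_gt hzab.2
          · omega
        · exact hS.visible a b hab hb z hz hzab
    · exact mem_insert_of_mem (mem_insert_of_mem (hS.isTriang.side_mem
        (ear.lt_apex.trans ear.apex_lt) ear.left_mem ear.right_mem ear.gap))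

end Compatible

section Coding

variable {n m c x : ℕ} {st : List ℕ} {R : Finset (ℕ × ℕ)}

lemma exists_eq_cons_of_false_cons_mem {w : List Bool}
    (hw : false :: w ∈ ballotWords m st.length) :
    ∃ y st', st = y :: st' ∧ w ∈ ballotWords m st'.length := by
  obtain ⟨k, hk, hw'⟩ := false_cons_mem_ballotWords.1 hw
  obtain ⟨y, st', rfl⟩ := List.exists_cons_of_length_eq_add_one hk
  obtain rfl := Nat.succ_injective hk
  exact ⟨y, st', rfl, hw'⟩

lemma compatible_chordsOfWord {w : List Bool} (hw : w ∈ ballotWords m st.length)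
    (hn : c + m = n) (h : IsStack c x st) : Compatible n c x st (chordsOfWord w c x st) := by
  induction w generalizing m c x st with
  | nil =>
    obtain ⟨rfl, hst⟩ := nil_mem_ballotWords.1 hw
    obtain rfl := List.length_eq_zero_iff.1 hst
    obtain rfl : c = n := hn
    exact Compatible.singleton h
  | cons b w ih =>
    cases b with
    | true =>
      obtain ⟨m, rfl, hw'⟩ := true_cons_mem_ballotWords.1 hw
      exact (ih (st := x :: st) hw' (by omega) h.push).of_push (by omega)
    | false =>
      obtain ⟨y, st, rfl, hw'⟩ := exists_eq_cons_of_false_cons_mem hw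
      exact ((Compatible.pop_iff (by omega) h).2 ⟨_, ih hw' hn h.pop, rfl⟩).1

theorem exists_chordsOfWord_eq (hn : c + m = n) (h : IsStack c x st)
    (hR : Compatible n c x st R) : ∃ w ∈ ballotWords m st.length, chordsOfWord w c x st = R := by
  induction hN : 2 * m + st.length using Nat.strong_induction_on generalizing m c x st R with
  | _ N ih =>
  subst hN
  have push {l : ℕ} (hm : m = l + 1) (hR : Compatible n (c + 1) (c + 1) (x :: st) R) :
      ∃ w ∈ ballotWords m st.length, chordsOfWord w c x st = R := by
    obtain ⟨w, hw, rfl⟩ :=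
      ih _ (by simp only [List.length_cons]; omega) (by omega : c + 1 + l = n) h.push hR rfl
    exact ⟨true :: w, true_cons_mem_ballotWords.2 ⟨l, hm, hw⟩, rfl⟩
  match m, st with
  | 0, [] =>
    obtain rfl : c = n := hn
    exact ⟨[], nil_mem_ballotWords.2 ⟨rfl, rfl⟩, (hR.eq_singleton h).symm⟩
  | m + 1, [] => exact push rfl (hR.push_nil (by omega) h)
  | m, y :: st =>
    by_cases hy : (y, c + 1) ∈ R
    · obtain ⟨S, hS, rfl⟩ := (Compatible.pop_iff (by omega) h).1 ⟨hR, hy⟩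
      obtain ⟨w, hw, rfl⟩ := ih _ (by simp only [List.length_cons]; omega) hn h.pop hS rfl
      exact ⟨false :: w, false_cons_mem_ballotWords.2 ⟨_, rfl, hw⟩, rfl⟩
    · obtain _ | l := m
      · refine absurd (hR.pop_mem (by omega) h fun z hz hxz => ?_) hy
        obtain hz' | hz' := hR.isTriang.right_mem hxz
        · have := (h.le_top hz').trans h.le
          omega
        · omega
      · exact push rfl (hR.push_cons (by omega) h hy)

lemma chordsOfWord_true_ne_false {w v : List Bool} (h : IsStack c x st)
    (hw : true :: w ∈ ballotWords m st.length) (hv : false :: v ∈ ballotWords m st.length) :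
    chordsOfWord (true :: w) c x st ≠ chordsOfWord (false :: v) c x st := by
  obtain ⟨l, rfl, hw'⟩ := true_cons_mem_ballotWords.1 hw
  obtain ⟨y, st, rfl, hv'⟩ := exists_eq_cons_of_false_cons_mem hv
  have hwR : Compatible _ _ _ (x :: y :: st) _ := compatible_chordsOfWord hw' rfl h.push
  have hvR := (Compatible.pop_iff (by omega) h).2 ⟨_, compatible_chordsOfWord hv' rfl h.pop, rfl⟩
  exact fun heq => hwR.notMem_of_push h (heq ▸ hvR.2)

theorem chordsOfWord_inj {w v : List Bool} (h : IsStack c x st)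
    (hw : w ∈ ballotWords m st.length) (hv : v ∈ ballotWords m st.length)
    (heq : chordsOfWord w c x st = chordsOfWord v c x st) : w = v := by
  induction w generalizing v m c x st with
  | nil =>
    obtain ⟨rfl, hst⟩ := nil_mem_ballotWords.1 hw
    rw [hst, ballotWords_zero] at hv
    exact (mem_singleton.1 hv).symm
  | cons a w ih =>
    match a, v with
    | _, [] =>
      obtain ⟨rfl, hst⟩ := nil_mem_ballotWords.1 hv
      rw [hst, ballotWords_zero] at hw
      exact mem_singleton.1 hw
    | true, false :: v => exact absurd heq (chordsOfWord_true_ne_false h hw hv)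
    | false, true :: v => exact absurd heq.symm (chordsOfWord_true_ne_false h hv hw)
    | true, true :: v =>
      obtain ⟨l, rfl, hw'⟩ := true_cons_mem_ballotWords.1 hw
      obtain ⟨_, hl, hv'⟩ := true_cons_mem_ballotWords.1 hv
      obtain rfl := Nat.succ_injective hl
      rw [ih (st := x :: st) h.push hw' hv' heq]
    | false, false :: v =>
      obtain ⟨y, st, rfl, hw'⟩ := exists_eq_cons_of_false_cons_mem hw
      obtain ⟨_, _, hst, hv'⟩ := exists_eq_cons_of_false_cons_mem hv
      obtain ⟨rfl, rfl⟩ := List.cons.inj hst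
      rw [ih h.pop hw' hv' ((h.isEar (by omega)).insert_inj
        (compatible_chordsOfWord hw' rfl h.pop).isTriang
        (compatible_chordsOfWord hv' rfl h.pop).isTriang heq)]

end Coding

theorem bijOn_chordsOfWord (n : ℕ) :
    Set.BijOn (fun w => chordsOfWord w 0 0 []) (ballotWords n 0)
      {R | IsTriang (Set.Iic (n + 1)) R} := by
  have h : IsStack 0 0 [] := ⟨le_rfl, List.pairwise_singleton _ _⟩
  have hQ : sweepPolygon n 0 [0] = Set.Iic (n + 1) := by
    ext q
    simp only [sweepPolygon, List.mem_singleton, Set.mem_ofPred_eq, Set.mem_Iic]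
    omega
  refine ⟨fun w hw => ?_, fun w hw v hv => chordsOfWord_inj (st := []) h hw hv, fun R hR => ?_⟩
  · exact hQ ▸ (compatible_chordsOfWord (st := []) hw (zero_add n) h).isTriang
  · refine exists_chordsOfWord_eq (st := []) (zero_add n) h ⟨hQ ▸ hR, ?_⟩
    simp

lemma card_chordsOfWord {w : List Bool} {m c x : ℕ} {st : List ℕ} (h : IsStack c x st)
    (hw : w ∈ ballotWords m st.length) :
    #(chordsOfWord w c x st) = 2 * (m + st.length) + 1 := by
  induction w generalizing m c x st with
  | nil =>
    obtain ⟨rfl, hst⟩ := nil_mem_ballotWords.1 hw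
    simp [chordsOfWord, hst]
  | cons b w ih =>
    cases b with
    | true =>
      obtain ⟨l, rfl, hw'⟩ := true_cons_mem_ballotWords.1 hw
      rw [chordsOfWord, ih (st := x :: st) h.push hw', List.length_cons]
      ring
    | false =>
      obtain ⟨y, st, rfl, hw'⟩ := exists_eq_cons_of_false_cons_mem hw
      have hR := (compatible_chordsOfWord hw' rfl h.pop).isTriang
      have ear := h.isEar (Nat.le_add_right c m)
      have hxR : (x, c + 1) ∉ chordsOfWord w c y st := fun hx => ear.apex_notMem (hR.left_mem hx)
      have hyR : (y, x) ∉ insert (x, c + 1) (chordsOfWord w c y st) := by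
        rw [mem_insert, Prod.mk.injEq, not_or]
        exact ⟨fun hyx => ear.lt_apex.ne hyx.1, fun hy => ear.apex_notMem (hR.right_mem hy)⟩
      rw [chordsOfWord, card_insert_of_notMem hyR, card_insert_of_notMem hxR, ih h.pop hw',
        List.length_cons]
      ring

lemma IsTriang.card_eq {n : ℕ} {R : Finset (ℕ × ℕ)} (hR : IsTriang (Set.Iic (n + 1)) R) :
    #R = 2 * n + 1 := by
  obtain ⟨w, hw, rfl⟩ := (bijOn_chordsOfWord n).surjOn hR
  exact card_chordsOfWord (st := []) ⟨le_rfl, List.pairwise_singleton _ _⟩ hw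

/-! ### Flips of triangulations -/

/-- `B` arises from the set of chords `A` by exchanging a chord for one which crosses it. -/
def IsFlip (A B : Finset (ℕ × ℕ)) : Prop :=
  ∃ e f X, Cross e f ∧ A = insert e X ∧ B = insert f X

lemma IsFlip.insert_insert {A B : Finset (ℕ × ℕ)} (h : IsFlip A B) (a : ℕ × ℕ) :
    IsFlip (insert a A) (insert a B) := by
  obtain ⟨e, f, X, hef, rfl, rfl⟩ := h
  exact ⟨e, f, _, hef, insert_comm a e X, insert_comm a f X⟩

lemma IsFlip.symm {A B : Finset (ℕ × ℕ)} (h : IsFlip A B) : IsFlip B A := by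
  obtain ⟨e, f, X, hef, hA, hB⟩ := h
  exact ⟨f, e, X, hef.symm, hB, hA⟩

lemma IsFlip.card_sdiff {Q : Set ℕ} {A B : Finset (ℕ × ℕ)} (h : IsFlip A B)
    (hB : IsTriang Q B) : #(A \ B) = 1 := by
  obtain ⟨e, f, X, hef, rfl, rfl⟩ := h
  have he : e ∉ insert f X := fun he => hB.not_cross he (mem_insert_self f X) hef
  rw [insert_sdiff_of_notMem _ he, sdiff_eq_empty_iff_subset.2 (subset_insert f X),
    insert_empty_eq, card_singleton]

lemma chordsOfWord_insertDown {v : List Bool} {m c u x y : ℕ} {l st : List ℕ}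
    (hv : v ∈ ballotWords m (l.length + st.length + 1)) :
    ∃ X e, c ≤ e ∧
      chordsOfWord v c u (l ++ y :: st) = insert (y, (u :: l).getLast (List.cons_ne_nil u l)) X ∧
      chordsOfWord (insertDown (l.length + 1) v) c u (l ++ x :: y :: st) =
        insert (x, (u :: l).getLast (List.cons_ne_nil u l))
          (insert (y, x) (insert (x, e + 1) X)) := by
  induction v generalizing m c u l with
  | nil =>
    have := nil_mem_ballotWords.1 hv
    omega
  | cons b v ih =>
    match b, l with
    | true, l =>
      obtain ⟨_, rfl, hv'⟩ := true_cons_mem_ballotWords.1 hv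
      obtain ⟨X, e, hce, hX₁, hX₂⟩ := ih (l := u :: l) (u := c + 1) (c := c + 1)
        (by rwa [List.length_cons, add_right_comm l.length])
      refine ⟨X, e, by omega, ?_, ?_⟩
      · simpa [chordsOfWord] using hX₁
      · simpa [chordsOfWord, insertDown] using hX₂
    | false, [] =>
      refine ⟨insert (u, c + 1) (chordsOfWord v c y st), c, le_rfl, rfl, ?_⟩
      simp only [insertDown, chordsOfWord, List.nil_append, List.length_nil]
      rw [List.getLast_singleton]
      ext p
      simp only [mem_insert]
      tauto
    | false, z :: l =>
      obtain ⟨k, hk, hv'⟩ := false_cons_mem_ballotWords.1 hv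
      obtain rfl : k = l.length + st.length + 1 := by
        rw [List.length_cons] at hk
        omega
      obtain ⟨X, e, hce, hX₁, hX₂⟩ := ih (l := l) (u := z) (c := c) hv'
      refine ⟨insert (z, u) (insert (u, c + 1) X), e, hce, ?_, ?_⟩
      · simp only [List.cons_append, chordsOfWord, hX₁, List.getLast_cons_cons]
        ext p
        simp only [mem_insert]
        tauto
      · simp only [List.cons_append, List.length_cons, insertDown, chordsOfWord, hX₂,
          List.getLast_cons_cons]
        ext p
        simp only [mem_insert]
        tauto

theorem isFlip_chordsOfWord {m k c x : ℕ} {st : List ℕ} {p : List Bool × List Bool}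
    (hp : p ∈ flipPairs m k) (hk : st.length = k) (h : IsStack c x st) :
    IsFlip (chordsOfWord p.1 c x st) (chordsOfWord p.2 c x st) := by
  induction m, k using ballot_induction generalizing c x st p with
  | zero k => simp [flipPairs_zero] at hp
  | succ_zero m ih =>
    rw [flipPairs_succ_zero] at hp
    obtain ⟨q, hq, rfl⟩ := mem_image.1 hp
    exact ih (st := x :: st) hq (by rw [List.length_cons, hk]) h.push
  | succ_succ m k ih₁ ih₂ =>
    obtain ⟨y, st, rfl⟩ := List.exists_cons_of_length_eq_add_one hk
    rw [flipPairs_succ_succ, mem_union, mem_union] at hp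
    simp only [mem_image] at hp
    rcases hp with ⟨q, hq, rfl⟩ | ⟨q, hq, rfl⟩ | ⟨v, hv, rfl⟩
    · exact ((ih₁ hq (Nat.succ_injective hk) h.pop).insert_insert _).insert_insert _
    · exact ih₂ (st := x :: y :: st) hq (by rw [List.length_cons, hk]) h.push
    · rw [← Nat.succ_injective hk] at hv
      obtain ⟨X, e, hce, hX₁, hX₂⟩ := chordsOfWord_insertDown (l := []) (c := c + 1) (u := c + 1)
        (x := x) (y := y) (st := st) (m := m) (by simpa using hv)
      refine ⟨(y, c + 1), (x, e + 1), insert (y, x) (insert (x, c + 1) X), .inl ?_, ?_, ?_⟩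
      · have := h.lt_top List.mem_cons_self
        have := h.le
        dsimp only
        omega
      · simp only [List.nil_append, List.getLast_singleton] at hX₁
        simp only [chordsOfWord, hX₁]
        ext p
        simp only [mem_insert]
        tauto
      · simp only [List.nil_append, List.length_nil, List.getLast_singleton, zero_add] at hX₂
        simp only [chordsOfWord, hX₂]
        ext p
        simp only [mem_insert]
        tauto

lemma mem_ballotWords_of_mem_flipPairs {n k : ℕ} {p : List Bool × List Bool}
    (hp : p ∈ flipPairs n k) : p.1 ∈ ballotWords n k ∧ p.2 ∈ ballotWords n k := by
  -- A flip pair leaving `ballotWords n k` would be charged to the indicator of its complement.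
  let φ : List Bool → ℝ := fun w => if w ∈ ballotWords n k then 0 else 1
  have hφ (w : List Bool) : 0 ≤ φ w := by positivity
  have hsum : n * ∑ w ∈ ballotWords n k, φ w = 0 := by
    rw [sum_eq_zero fun w hw => if_pos hw, mul_zero]
  have mem_of_le {w : List Bool} (hw : φ w ≤ 0) : w ∈ ballotWords n k := by
    by_contra hw'
    exact absurd hw (by simp [φ, hw'])
  exact ⟨mem_of_le (((single_le_sum (fun q _ => hφ q.1) hp).trans
      (sum_flipPairs_fst_le n k hφ)).trans_eq hsum),
    mem_of_le (((single_le_sum (fun q _ => hφ q.2) hp).trans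
      (sum_flipPairs_snd_le n k hφ)).trans_eq hsum)⟩

section Quad

variable {Q : Set ℕ} {R S : Finset (ℕ × ℕ)} {a b c d v : ℕ} {e f : ℕ × ℕ}

lemma IsTriang.exists_apex (hR : IsTriang Q R) (hab : (a, b) ∈ R) (hv : v ∈ Q) (hav : a < v)
    (hvb : v < b) : ∃ m, (a, m) ∈ R ∧ (m, b) ∈ R := by
  classical
  have hnext : ∃ u, u ∈ Q ∧ a < u := ⟨v, hv, hav⟩
  obtain ⟨hu, hau⟩ := Nat.find_spec hnext
  have hub : Nat.find hnext < b := (Nat.find_min' hnext ⟨hv, hav⟩).trans_lt hvb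
  have hside : (a, Nat.find hnext) ∈ R := hR.side_mem hau (hR.left_mem hab) hu fun q hq haq =>
    Nat.find_min hnext haq.2 ⟨hq, haq.1⟩
  obtain ⟨m, ⟨ham, hmb⟩, hmax⟩ := exists_max_image ((range b).filter fun u => (a, u) ∈ R) id
    ⟨_, mem_filter.2 ⟨mem_range.2 hub, hside⟩⟩ |>.imp fun m hm => hm.imp_left fun h =>
      (mem_filter.1 h).symm
  rw [mem_range] at hmb
  refine ⟨m, ham, (hR _).2 ⟨hmb, hR.right_mem ham, hR.right_mem hab, fun ⟨s, t⟩ hst hcross => ?_⟩⟩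
  have hst_am := hR.not_cross hst ham
  have hst_ab := hR.not_cross hst hab
  have := hR.lt ham
  simp only [Cross] at hcross hst_am hst_ab
  obtain rfl : s = a := by omega
  have htm := hmax t (mem_filter.2 ⟨mem_range.2 (by omega), hst⟩)
  simp only [id] at htm
  omega

/-- The triangle beyond `(a, b)` lies below a minimal chord which strictly encloses `(a, b)`. -/
lemma IsTriang.exists_outer_apex (hR : IsTriang Q R) (hab : (a, b) ∈ R) (hcd : (c, d) ∈ R)
    (hca : c ≤ a) (hbd : b ≤ d) (hne : (a, b) ≠ (c, d)) :
    ∃ z, (z, a) ∈ R ∧ (z, b) ∈ R ∨ (b, z) ∈ R ∧ (a, z) ∈ R := by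
  induction hN : d - c using Nat.strong_induction_on generalizing c d with
  | _ N ih =>
  subst hN
  have hlt := hR.lt hab
  obtain ⟨v, hv, hcv, hvd⟩ : ∃ v ∈ Q, c < v ∧ v < d := by
    rcases hca.lt_or_eq with hca | rfl
    · exact ⟨a, hR.left_mem hab, hca, by omega⟩
    · exact ⟨b, hR.right_mem hab, hlt, hbd.lt_of_ne fun h => hne (h ▸ rfl)⟩
  obtain ⟨q, hcq, hqd⟩ := hR.exists_apex hcd hv hcv hvd
  have := hR.lt hcq
  have := hR.lt hqd
  have hq : q ≤ a ∨ b ≤ q := by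
    have h₁ := hR.not_cross hab hcq
    have h₂ := hR.not_cross hab hqd
    rw [Ne, Prod.mk.injEq] at hne
    simp only [Cross] at h₁ h₂
    omega
  rcases hq with hqa | hbq
  · by_cases heq : (a, b) = (q, d)
    · obtain ⟨rfl, rfl⟩ := Prod.mk.inj heq
      exact ⟨c, .inl ⟨hcq, hcd⟩⟩
    · exact ih (d - q) (by omega) hqd hqa hbd heq rfl
  · by_cases heq : (a, b) = (c, q)
    · obtain ⟨rfl, rfl⟩ := Prod.mk.inj heq
      exact ⟨d, .inr ⟨hqd, hcd⟩⟩
    · exact ih (q - c) (by omega) hcq hca hbq heq rfl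

/-- `e` and `f` are the two diagonals of a quadrilateral whose sides are chords of `R`. -/
def IsDiagonalPair (R : Finset (ℕ × ℕ)) (e f : ℕ × ℕ) : Prop :=
  ∃ i j k l, (i < j ∧ j < k ∧ k < l) ∧ ((i, j) ∈ R ∧ (j, k) ∈ R ∧ (k, l) ∈ R ∧ (i, l) ∈ R) ∧
    (e = (i, k) ∧ f = (j, l) ∨ e = (j, l) ∧ f = (i, k))

namespace IsDiagonalPair

lemma symm (h : IsDiagonalPair R e f) : IsDiagonalPair R f e := by
  obtain ⟨i, j, k, l, hlt, hR, hef⟩ := h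
  exact ⟨i, j, k, l, hlt, hR, hef.symm.imp And.symm And.symm⟩

lemma cross (h : IsDiagonalPair R e f) : Cross e f := by
  obtain ⟨i, j, k, l, ⟨hij, hjk, hkl⟩, -, ⟨rfl, rfl⟩ | ⟨rfl, rfl⟩⟩ := h
  · exact .inl ⟨hij, hjk, hkl⟩
  · exact .inr ⟨hij, hjk, hkl⟩

lemma eq_of_cross (h : IsDiagonalPair R e f) {p : ℕ × ℕ} (hp : p.1 < p.2)
    (hpR : ∀ q ∈ R.erase e, ¬Cross p q) (hpe : Cross p e) : p = f := by
  obtain ⟨i, j, k, l, ⟨hij, hjk, hkl⟩, ⟨hijR, hjkR, hklR, hilR⟩, hef⟩ := h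
  have side {q : ℕ × ℕ} (hq : q ∈ R) (hqe : q ≠ e) : ¬Cross p q := hpR q (mem_erase.2 ⟨hqe, hq⟩)
  obtain ⟨a, b⟩ := p
  rcases hef with ⟨rfl, rfl⟩ | ⟨rfl, rfl⟩ <;>
  · have h₁ := side hijR (by simp; omega)
    have h₂ := side hjkR (by simp; omega)
    have h₃ := side hklR (by simp; omega)
    have h₄ := side hilR (by simp; omega)
    simp only [Cross, Prod.mk.injEq] at *
    omega

lemma snd_valid (h : IsDiagonalPair R e f) (hR : IsTriang Q R) :
    f.1 < f.2 ∧ f.1 ∈ Q ∧ f.2 ∈ Q := by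
  obtain ⟨i, j, k, l, ⟨hij, hjk, hkl⟩, ⟨hijR, -, hklR, -⟩, ⟨-, rfl⟩ | ⟨-, rfl⟩⟩ := h
  · exact ⟨hjk.trans hkl, hR.right_mem hijR, hR.right_mem hklR⟩
  · exact ⟨hij.trans hjk, hR.left_mem hijR, hR.left_mem hklR⟩

lemma not_cross_of_mem_erase (h : IsDiagonalPair R e f) (hR : IsTriang Q R) {q : ℕ × ℕ}
    (hq : q ∈ R.erase e) : ¬Cross q f := fun hqf =>
  have hqR := mem_of_mem_erase hq
  ne_of_mem_erase hq (h.symm.eq_of_cross (hR.lt hqR)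
    (fun _ hr => hR.not_cross hqR (mem_of_mem_erase hr)) hqf)

lemma isTriang_insert_erase (h : IsDiagonalPair R e f) (hR : IsTriang Q R) :
    IsTriang Q (insert f (R.erase e)) := by
  intro p
  simp only [mem_insert, forall_eq_or_imp]
  constructor
  · rintro (rfl | hp)
    · obtain ⟨hlt, h₁, h₂⟩ := h.snd_valid hR
      exact ⟨hlt, h₁, h₂, not_cross_self _, fun q hq hc => h.not_cross_of_mem_erase hR hq hc.symm⟩
    · have hpR := mem_of_mem_erase hp
      exact ⟨hR.lt hpR, hR.left_mem hpR, hR.right_mem hpR, h.not_cross_of_mem_erase hR hp,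
        fun q hq => hR.not_cross hpR (mem_of_mem_erase hq)⟩
  · rintro ⟨hlt, h₁, h₂, hpf, hp⟩
    by_cases hpe : Cross p e
    · exact .inl (h.eq_of_cross hlt hp hpe)
    · refine .inr (mem_erase.2 ⟨fun he => hpf (he ▸ h.cross), ?_⟩)
      refine (hR p).2 ⟨hlt, h₁, h₂, fun q hq => ?_⟩
      by_cases hqe : q = e
      · exact hqe ▸ hpe
      · exact hp q (mem_erase.2 ⟨hqe, hq⟩)

lemma eq_insert_erase (h : IsDiagonalPair R e f) (hR : IsTriang Q R) (hS : IsTriang Q S)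
    (hRS : R \ S = {e}) : S = insert f (R.erase e) := by
  have he : e ∉ S := (mem_sdiff.1 (hRS ▸ mem_singleton_self e)).2
  have hsub : R.erase e ⊆ S := by
    rw [← sdiff_singleton_eq_erase, ← hRS, sdiff_sdiff_right_self]
    exact inter_subset_right
  refine hS.eq_of_subset (h.isTriang_insert_erase hR) fun p hp => ?_
  have hpR (q : ℕ × ℕ) (hq : q ∈ R.erase e) : ¬Cross p q := hS.not_cross hp (hsub hq)
  by_cases hpe : Cross p e
  · exact mem_insert.2 (.inl (h.eq_of_cross (hS.lt hp) hpR hpe))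
  · refine mem_insert_of_mem (mem_erase.2 ⟨fun hpe' => he (hpe' ▸ hp), (hR p).2
      ⟨hS.lt hp, hS.left_mem hp, hS.right_mem hp, fun q hq => ?_⟩⟩)
    by_cases hqe : q = e
    · exact hqe ▸ hpe
    · exact hpR q (mem_erase.2 ⟨hqe, hq⟩)

end IsDiagonalPair

lemma IsTriang.exists_isDiagonalPair (hR : IsTriang Q R) (hab : (a, b) ∈ R) (hv : v ∈ Q)
    (hav : a < v) (hvb : v < b) (hcd : (c, d) ∈ R) (hca : c ≤ a) (hbd : b ≤ d)
    (hne : (a, b) ≠ (c, d)) : ∃ f, IsDiagonalPair R (a, b) f := by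
  obtain ⟨m, ham, hmb⟩ := hR.exists_apex hab hv hav hvb
  have ham' := hR.lt ham
  have hmb' := hR.lt hmb
  obtain ⟨z, ⟨hza, hzb⟩ | ⟨hbz, haz⟩⟩ := hR.exists_outer_apex hab hcd hca hbd hne
  · exact ⟨(z, m), z, a, m, b, ⟨hR.lt hza, ham', hmb'⟩, ⟨hza, ham, hmb, hzb⟩, .inr ⟨rfl, rfl⟩⟩
  · exact ⟨(m, z), a, m, b, z, ⟨ham', hmb', hR.lt hbz⟩, ⟨ham, hmb, hbz, haz⟩, .inl ⟨rfl, rfl⟩⟩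

theorem IsTriang.existsUnique_flip (hR : IsTriang Q R) (hab : (a, b) ∈ R) (hv : v ∈ Q)
    (hav : a < v) (hvb : v < b) (hcd : (c, d) ∈ R) (hca : c ≤ a) (hbd : b ≤ d)
    (hne : (a, b) ≠ (c, d)) : ∃! S, IsTriang Q S ∧ R \ S = {(a, b)} := by
  obtain ⟨f, hf⟩ := hR.exists_isDiagonalPair hab hv hav hvb hcd hca hbd hne
  have habf : (a, b) ∉ insert f (R.erase (a, b)) := fun h =>
    (hf.isTriang_insert_erase hR).not_cross h (mem_insert_self _ _) hf.cross
  refine ⟨_, ⟨hf.isTriang_insert_erase hR, ?_⟩, fun S hS => hf.eq_insert_erase hR hS.1 hS.2⟩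
  ext p
  rw [mem_sdiff, mem_singleton]
  refine ⟨fun ⟨hp, hpS⟩ => ?_, by rintro rfl; exact ⟨hab, habf⟩⟩
  by_contra hpe
  exact hpS (mem_insert_of_mem (mem_erase.2 ⟨hpe, hp⟩))

end Quad

/-! ### Triangulations of the convex polygon -/

lemma val_sub_eq_ite {m : ℕ} (a b : Fin m) :
    (b - a).val = if a.val ≤ b.val then b.val - a.val else b.val + m - a.val := by
  split_ifs with h
  · exact Fin.coe_sub_iff_le.2 h
  · rw [Fin.coe_sub_iff_lt.2 (Fin.lt_def.2 (not_le.1 h))]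
    omega

lemma cycBtw_iff {m : ℕ} (a b x : Fin m) : CycBtw a b x ↔
    a.val < x.val ∧ x.val < b.val ∨ b.val < a.val ∧ a.val < x.val ∨
      b.val < a.val ∧ x.val < b.val := by
  rw [CycBtw, val_sub_eq_ite, val_sub_eq_ite]
  have := a.isLt
  have := b.isLt
  have := x.isLt
  split_ifs <;> omega

lemma polyAdj_iff {n : ℕ} (a b : Fin (n + 2)) : PolyAdj a b ↔
    b.val = a.val + 1 ∨ a.val = b.val + 1 ∨
      a.val = 0 ∧ b.val = n + 1 ∨ b.val = 0 ∧ a.val = n + 1 := by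
  rw [PolyAdj, val_sub_eq_ite, val_sub_eq_ite]
  have := a.isLt
  have := b.isLt
  split_ifs <;> omega

/-- A pair of polygon vertices as an ordered pair of labels, the smaller one first. -/
def chord {m : ℕ} (e : Sym2 (Fin m)) : ℕ × ℕ := (e.inf.val, e.sup.val)

lemma chord_mk {m : ℕ} {a b : Fin m} (h : a < b) : chord s(a, b) = (a.val, b.val) := by
  rw [chord, Sym2.inf_mk, Sym2.sup_mk, inf_eq_left.2 h.le, sup_eq_right.2 h.le]

lemma exists_lt_of_not_isDiag {m : ℕ} {e : Sym2 (Fin m)} (h : ¬e.IsDiag) :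
    ∃ a b, a < b ∧ e = s(a, b) := by
  induction e using Sym2.ind with
  | _ a b =>
    rcases lt_or_gt_of_ne (mt Sym2.mk_isDiag_iff.2 h) with hab | hba
    · exact ⟨a, b, hab, rfl⟩
    · exact ⟨b, a, hba, Sym2.eq_swap⟩

lemma chord_injective {m : ℕ} : Function.Injective (chord (m := m)) := fun _ _ h => by
  rw [chord, chord, Prod.mk.injEq, ← Fin.ext_iff, ← Fin.ext_iff] at h
  exact Sym2.inf_eq_inf_and_sup_eq_sup.1 h

lemma crosses_def {m : ℕ} {e f : Sym2 (Fin m)} :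
    Crosses e f ↔ ∀ a b, e = s(a, b) → ∃ c d, f = s(c, d) ∧
      (CycBtw a b c ∧ ¬CycBtw a b d ∨ CycBtw a b d ∧ ¬CycBtw a b c) :=
  Iff.rfl

lemma crosses_iff_cross {m : ℕ} {e f : Sym2 (Fin m)} (he : ¬e.IsDiag) (hf : ¬f.IsDiag) :
    Crosses e f ↔ Cross (chord e) (chord f) := by
  obtain ⟨a, b, hab, rfl⟩ := exists_lt_of_not_isDiag he
  obtain ⟨c, d, hcd, rfl⟩ := exists_lt_of_not_isDiag hf
  rw [chord_mk hab, chord_mk hcd]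
  rw [Fin.lt_def] at hab hcd
  simp only [crosses_def, cycBtw_iff, Cross]
  constructor
  · intro h
    obtain ⟨x, y, hxy, hx⟩ := h a b rfl
    obtain ⟨z, w, hzw, hz⟩ := h b a Sym2.eq_swap
    rw [Sym2.eq_iff] at hxy hzw
    rcases hxy with ⟨rfl, rfl⟩ | ⟨rfl, rfl⟩ <;> rcases hzw with ⟨rfl, rfl⟩ | ⟨rfl, rfl⟩ <;> omega
  · intro h x y hxy
    refine ⟨c, d, rfl, ?_⟩
    rcases Sym2.eq_iff.1 hxy with ⟨rfl, rfl⟩ | ⟨rfl, rfl⟩ <;> omega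

/-- The sides of the convex `(n + 2)`-gon, as ordered pairs of labels. -/
def polygonSides (n : ℕ) : Finset (ℕ × ℕ) :=
  insert (0, n + 1) ((range (n + 1)).image fun i => (i, i + 1))

lemma mem_polygonSides {n : ℕ} {p : ℕ × ℕ} :
    p ∈ polygonSides n ↔ p.1 = 0 ∧ p.2 = n + 1 ∨ p.2 = p.1 + 1 ∧ p.1 ≤ n := by
  obtain ⟨a, b⟩ := p
  simp only [polygonSides, mem_insert, Prod.mk.injEq, mem_image, mem_range]
  refine or_congr_right ⟨?_, fun h => ⟨a, by omega⟩⟩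
  rintro ⟨i, h⟩
  omega

lemma card_polygonSides {n : ℕ} (hn : 1 ≤ n) : #(polygonSides n) = n + 2 := by
  rw [polygonSides, card_insert_of_notMem, card_image_of_injective, card_range]
  · exact fun i j h => (Prod.mk.inj h).1
  · simp only [mem_image, Prod.mk.injEq, not_exists]
    omega

lemma not_cross_of_mem_polygonSides {n : ℕ} {p q : ℕ × ℕ} (hp : p ∈ polygonSides n)
    (hq : q.2 ≤ n + 1) : ¬Cross p q := by
  rw [mem_polygonSides] at hp
  simp only [Cross]
  omega

section

variable {n : ℕ} {e : Sym2 (Fin (n + 2))} {p : ℕ × ℕ} {s t : Finset (Sym2 (Fin (n + 2)))}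

lemma isDiagonal_iff : IsDiagonal e ↔ (chord e).1 < (chord e).2 ∧ chord e ∉ polygonSides n := by
  rw [mem_polygonSides]
  by_cases he : e.IsDiag
  · induction e using Sym2.ind with
    | _ a b =>
      obtain rfl := Sym2.mk_isDiag_iff.1 he
      simp [IsDiagonal, chord]
  obtain ⟨a, b, hab, rfl⟩ := exists_lt_of_not_isDiag he
  rw [chord_mk hab]
  rw [Fin.lt_def] at hab
  have := b.isLt
  constructor
  · rintro ⟨-, h⟩
    have h := h a b rfl
    rw [polyAdj_iff] at h
    omega
  · refine fun h => ⟨he, fun x y hxy => ?_⟩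
    rw [polyAdj_iff]
    rcases Sym2.eq_iff.1 hxy with ⟨rfl, rfl⟩ | ⟨rfl, rfl⟩ <;> omega

lemma chord_snd_le (e : Sym2 (Fin (n + 2))) : (chord e).2 ≤ n + 1 :=
  Nat.le_of_lt_succ e.sup.isLt

lemma exists_chord_eq (hlt : p.1 < p.2) (hp : p.2 ≤ n + 1) :
    ∃ e : Sym2 (Fin (n + 2)), chord e = p :=
  ⟨s(⟨p.1, by omega⟩, ⟨p.2, by omega⟩), chord_mk hlt⟩

/-- The chords of the dissection of the `(n + 2)`-gon by `t`: the members of `t` and the sides. -/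
def chordSet (t : Finset (Sym2 (Fin (n + 2)))) : Finset (ℕ × ℕ) := t.image chord ∪ polygonSides n

lemma mem_chordSet : p ∈ chordSet t ↔ (∃ e ∈ t, chord e = p) ∨ p ∈ polygonSides n := by
  rw [chordSet, mem_union, mem_image]

lemma chord_mem_chordSet (he : IsDiagonal e) : chord e ∈ chordSet t ↔ e ∈ t := by
  simp only [mem_chordSet, (isDiagonal_iff.1 he).2, or_false, chord_injective.eq_iff,
    exists_eq_right]

lemma bounds_of_mem_chordSet (ht : ∀ e ∈ t, IsDiagonal e) (hp : p ∈ chordSet t) :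
    p.1 < p.2 ∧ p.2 ≤ n + 1 := by
  rcases mem_chordSet.1 hp with ⟨e, he, rfl⟩ | hp
  · exact ⟨(isDiagonal_iff.1 (ht e he)).1, chord_snd_le e⟩
  · rw [mem_polygonSides] at hp
    omega

lemma disjoint_image_chord_polygonSides (ht : ∀ e ∈ t, IsDiagonal e) :
    Disjoint (t.image chord) (polygonSides n) :=
  disjoint_left.2 fun _ hp => by
    obtain ⟨e, he, rfl⟩ := mem_image.1 hp
    exact (isDiagonal_iff.1 (ht e he)).2

lemma chordSet_sdiff (hs : ∀ e ∈ s, IsDiagonal e) :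
    chordSet s \ chordSet t = (s \ t).image chord := by
  rw [image_sdiff _ _ chord_injective, chordSet, chordSet, union_sdiff_distrib,
    sdiff_eq_empty_iff_subset.2 (subset_union_right : polygonSides n ⊆ _), union_empty,
    sdiff_union_distrib, sdiff_eq_self_of_disjoint (disjoint_image_chord_polygonSides hs)]
  exact inter_eq_left.2 sdiff_subset

lemma isTriang_chordSet (ht : IsTriangulation n t) : IsTriang (Set.Iic (n + 1)) (chordSet t) := by
  obtain ⟨hdiag, hcross, hmax⟩ := ht
  refine fun p => ⟨fun hp => ?_, fun ⟨hlt, _, hle, hp⟩ => ?_⟩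
  · obtain ⟨hlt, hle⟩ := bounds_of_mem_chordSet hdiag hp
    refine ⟨hlt, hlt.le.trans hle, hle, fun q hq hpq => ?_⟩
    rcases mem_chordSet.1 hp with ⟨e, he, rfl⟩ | hp
    · rcases mem_chordSet.1 hq with ⟨f, hf, rfl⟩ | hq
      · exact hcross e he f hf ((crosses_iff_cross (hdiag e he).1 (hdiag f hf).1).2 hpq)
      · exact not_cross_of_mem_polygonSides hq hle hpq.symm
    · exact not_cross_of_mem_polygonSides hp (bounds_of_mem_chordSet hdiag hq).2 hpq
  · by_cases hside : p ∈ polygonSides n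
    · exact mem_chordSet.2 (.inr hside)
    obtain ⟨e, rfl⟩ := exists_chord_eq hlt hle
    have he : IsDiagonal e := isDiagonal_iff.2 ⟨hlt, hside⟩
    exact (chord_mem_chordSet he).2 (hmax e he fun f hf hef =>
      hp _ ((chord_mem_chordSet (hdiag f hf)).2 hf) ((crosses_iff_cross he.1 (hdiag f hf).1).1 hef))

lemma isTriangulation_of_isTriang_chordSet (hdiag : ∀ e ∈ t, IsDiagonal e)
    (ht : IsTriang (Set.Iic (n + 1)) (chordSet t)) : IsTriangulation n t := by
  refine ⟨hdiag, fun e he f hf hef => ?_, fun e he hmax => ?_⟩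
  · exact ht.not_cross ((chord_mem_chordSet (hdiag e he)).2 he)
      ((chord_mem_chordSet (hdiag f hf)).2 hf)
      ((crosses_iff_cross (hdiag e he).1 (hdiag f hf).1).1 hef)
  · have hlt := (isDiagonal_iff.1 he).1
    have hle := chord_snd_le e
    refine (chord_mem_chordSet he).1 ((ht _).2 ⟨hlt, hlt.le.trans hle, hle, fun q hq hcross => ?_⟩)
    rcases mem_chordSet.1 hq with ⟨f, hf, rfl⟩ | hq
    · exact hmax f hf ((crosses_iff_cross he.1 (hdiag f hf).1).2 hcross)
    · exact not_cross_of_mem_polygonSides hq hle hcross.symm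

lemma exists_chordSet_eq {R : Finset (ℕ × ℕ)} (hR : IsTriang (Set.Iic (n + 1)) R) :
    ∃ t : Triangulation n, chordSet t.1 = R := by
  classical
  let t : Finset (Sym2 (Fin (n + 2))) := univ.filter fun e => IsDiagonal e ∧ chord e ∈ R
  have hdiag (e) (he : e ∈ t) : IsDiagonal e := (mem_filter.1 he).2.1
  have ht : chordSet t = R := by
    ext p
    rw [mem_chordSet]
    refine ⟨?_, fun hp => ?_⟩
    · rintro (⟨e, he, rfl⟩ | hp)
      · exact (mem_filter.1 he).2.2
      · have hp' := mem_polygonSides.1 hp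
        refine (hR p).2 ⟨by omega, ?_, ?_, fun q hq =>
          not_cross_of_mem_polygonSides hp (hR.right_mem hq)⟩ <;> rw [Set.mem_Iic] <;> omega
    · refine or_iff_not_imp_right.2 fun hside => ?_
      obtain ⟨e, rfl⟩ := exists_chord_eq (hR.lt hp) (hR.right_mem hp)
      exact ⟨e, mem_filter.2 ⟨mem_univ e, isDiagonal_iff.2 ⟨hR.lt hp, hside⟩, hp⟩, rfl⟩
  exact ⟨⟨t, isTriangulation_of_isTriang_chordSet hdiag (ht ▸ hR)⟩, ht⟩

end

/-! ### The flip walk -/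

variable {n : ℕ}

lemma chordSet_injective : Function.Injective fun t : Triangulation n => chordSet t.1 := by
  have subset_of_eq {s t : Triangulation n} (h : chordSet s.1 = chordSet t.1) : s.1 ⊆ t.1 := by
    rw [← sdiff_eq_empty_iff_subset, ← image_eq_empty (f := chord), ← chordSet_sdiff s.2.1, h,
      sdiff_self, bot_eq_empty]
  exact fun s t h => Subtype.ext ((subset_of_eq h).antisymm (subset_of_eq h.symm))

lemma card_triangulation (hn : 1 ≤ n) (t : Triangulation n) : #t.1 = n - 1 := by
  have h := (isTriang_chordSet t.2).card_eq
  rw [chordSet, card_union_of_disjoint (disjoint_image_chord_polygonSides t.2.1),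
    card_image_of_injective _ chord_injective, card_polygonSides hn] at h
  omega

lemma assocGraph_adj_iff {s t : Triangulation n} : (assocGraph n).Adj s t ↔
    #(chordSet s.1 \ chordSet t.1) = 1 ∧ #(chordSet t.1 \ chordSet s.1) = 1 := by
  rw [chordSet_sdiff s.2.1, chordSet_sdiff t.2.1, card_image_of_injective _ chord_injective,
    card_image_of_injective _ chord_injective]
  rfl

lemma existsUnique_adj_sdiff_eq (t : Triangulation n) {e : Sym2 (Fin (n + 2))} (he : e ∈ t.1) :
    ∃! s, (assocGraph n).Adj t s ∧ t.1 \ s.1 = {e} := by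
  have ht := isTriang_chordSet t.2
  have hdiag := t.2.1 e he
  have hchord := (chord_mem_chordSet hdiag).2 he
  obtain ⟨hlt, hside⟩ := isDiagonal_iff.1 hdiag
  have hle := chord_snd_le e
  have htop : ((0 : ℕ), n + 1) ∈ chordSet t.1 :=
    mem_chordSet.2 (.inr (mem_polygonSides.2 (.inl ⟨rfl, rfl⟩)))
  have sdiff_iff {s : Triangulation n} :
      chordSet t.1 \ chordSet s.1 = {chord e} ↔ t.1 \ s.1 = {e} := by
    rw [chordSet_sdiff t.2.1, ← image_singleton, (image_injective chord_injective).eq_iff]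
  rw [mem_polygonSides] at hside
  obtain ⟨S, ⟨hS, hdiff⟩, huniq⟩ :=
    ht.existsUnique_flip (a := (chord e).1) (b := (chord e).2) hchord
    (v := (chord e).1 + 1) (Set.mem_Iic.2 (by omega)) (by omega) (by omega) htop
    (Nat.zero_le _) hle fun h => hside (.inl (Prod.mk.inj h))
  obtain ⟨s, rfl⟩ := exists_chordSet_eq hS
  refine ⟨s, ⟨?_, sdiff_iff.1 hdiff⟩, fun s' hs' => ?_⟩
  · have hcomm := card_sdiff_comm (ht.card_eq.trans hS.card_eq.symm)
    rw [hdiff, card_singleton] at hcomm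
    exact assocGraph_adj_iff.2 ⟨by rw [hdiff, card_singleton], hcomm.symm⟩
  · exact chordSet_injective (huniq _ ⟨isTriang_chordSet s'.2, sdiff_iff.2 hs'.2⟩)

lemma assocGraph_isRegularOfDegree [(assocGraph n).LocallyFinite] (hn : 1 ≤ n) :
    (assocGraph n).IsRegularOfDegree (n - 1) := by
  intro t
  rw [← card_triangulation hn t, ← SimpleGraph.card_neighborFinset_eq_degree]
  have : Nonempty (Triangulation n) := ⟨t⟩
  choose! flip hflip using fun e (he : e ∈ t.1) => (existsUnique_adj_sdiff_eq t he).exists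
  refine (card_bij (fun e _ => flip e) (fun e he => ?_) (fun e he e' he' h => ?_)
    fun s hs => ?_).symm
  · exact ((assocGraph n).mem_neighborFinset t _).2 (hflip e he).1
  · exact singleton_injective ((hflip e he).2.symm.trans (h ▸ (hflip e' he').2))
  · have hadj := ((assocGraph n).mem_neighborFinset t s).1 hs
    obtain ⟨e, he⟩ := card_eq_one.1 hadj.1
    have het : e ∈ t.1 := (mem_sdiff.1 (he ▸ mem_singleton_self e)).1
    exact ⟨e, het, (existsUnique_adj_sdiff_eq t het).unique (hflip e het) ⟨hadj, he⟩⟩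

section FlipWalkMatrix

variable (n)

open Classical in
lemma flipWalkMatrix_eq : flipWalkMatrix n =
    (1 / 2 : ℝ) • 1 + (1 / (2 * ((n : ℝ) - 1))) • (assocGraph n).adjMatrix ℝ := by
  ext s t
  by_cases hst : s = t
  · simp [flipWalkMatrix, hst]
  · simp [flipWalkMatrix, hst]

lemma flipWalkMatrix_diag (t : Triangulation n) : flipWalkMatrix n t t = 1 / 2 := by
  simp [flipWalkMatrix]

variable {n}

lemma flipWalkMatrix_mem_doublyStochastic (hn : 2 ≤ n) :
    flipWalkMatrix n ∈ doublyStochastic ℝ (Triangulation n) := by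
  classical
  have hn' : (2 : ℝ) ≤ n := by exact_mod_cast hn
  have hpos : (0 : ℝ) < n - 1 := by linarith
  have hsymm : (flipWalkMatrix n).transpose = flipWalkMatrix n := by
    rw [flipWalkMatrix_eq, Matrix.transpose_add, Matrix.transpose_smul, Matrix.transpose_smul,
      Matrix.transpose_one, SimpleGraph.transpose_adjMatrix]
  have hrow : (flipWalkMatrix n).mulVec 1 = 1 := by
    ext t
    have hdeg : ((assocGraph n).adjMatrix ℝ).mulVec 1 t = (n - 1 : ℕ) * 1 :=
      SimpleGraph.adjMatrix_mulVec_const_apply_of_regular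
        (assocGraph_isRegularOfDegree (Nat.one_le_of_lt hn))
    rw [flipWalkMatrix_eq, Matrix.add_mulVec, Matrix.smul_mulVec, Matrix.smul_mulVec,
      Matrix.one_mulVec, Pi.add_apply, Pi.smul_apply, Pi.smul_apply, hdeg,
      Nat.cast_pred (by omega), Pi.one_apply, smul_eq_mul, smul_eq_mul]
    field_simp
    norm_num
  refine mem_doublyStochastic.2 ⟨fun s t => ?_, hrow, ?_⟩
  · rw [flipWalkMatrix]
    split_ifs <;> positivity
  · rw [← Matrix.mulVec_transpose, hsymm, hrow]

end FlipWalkMatrix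

/-- The ballot word which encodes a triangulation. -/
noncomputable def ballotWord (t : Triangulation n) : List Bool :=
  Function.invFunOn (fun w => chordsOfWord w 0 0 []) (ballotWords n 0) (chordSet t.1)

lemma ballotWord_mem (t : Triangulation n) : ballotWord t ∈ ballotWords n 0 :=
  Function.invFunOn_mem ((bijOn_chordsOfWord n).surjOn (isTriang_chordSet t.2))

lemma chordsOfWord_ballotWord (t : Triangulation n) :
    chordsOfWord (ballotWord t) 0 0 [] = chordSet t.1 :=
  Function.invFunOn_eq (f := fun w => chordsOfWord w 0 0 [])
    ((bijOn_chordsOfWord n).surjOn (isTriang_chordSet t.2))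

lemma ballotWord_injective : Function.Injective (ballotWord (n := n)) := fun s t h =>
  chordSet_injective ((chordsOfWord_ballotWord s).symm.trans (h ▸ chordsOfWord_ballotWord t))

lemma image_ballotWord (n : ℕ) : univ.image (ballotWord (n := n)) = ballotWords n 0 := by
  ext w
  simp only [mem_image, mem_univ, true_and]
  refine ⟨fun ⟨t, ht⟩ => ht ▸ ballotWord_mem t, fun hw => ?_⟩
  obtain ⟨t, ht⟩ := exists_chordSet_eq ((bijOn_chordsOfWord n).mapsTo hw)
  exact ⟨t, (bijOn_chordsOfWord n).injOn (ballotWord_mem t) hw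
    ((chordsOfWord_ballotWord t).trans ht)⟩

lemma log_card_triangulation_le (n : ℕ) : Real.log (Fintype.card (Triangulation n)) ≤ 2 * n := by
  have hcard : Fintype.card (Triangulation n) ≤ 2 ^ (2 * n) := by
    rw [← card_univ, ← card_image_of_injective _ ballotWord_injective, image_ballotWord]
    exact card_ballotWords_le_two_pow n 0
  rcases (Fintype.card (Triangulation n)).eq_zero_or_pos with h0 | hpos
  · rw [h0, Nat.cast_zero, Real.log_zero]
    positivity
  calc Real.log (Fintype.card (Triangulation n)) ≤ Real.log (2 ^ (2 * n)) :=
        Real.log_le_log (by exact_mod_cast hpos) (by exact_mod_cast hcard)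
    _ = 2 * n * Real.log 2 := by rw [Real.log_pow]; push_cast; ring
    _ ≤ 2 * n := mul_le_of_le_one_right (by positivity) (by linarith [Real.log_two_lt_d9])

lemma adj_of_mem_flipPairs {s t : Triangulation n}
    (h : (ballotWord s, ballotWord t) ∈ flipPairs n 0) : (assocGraph n).Adj s t := by
  have hflip := isFlip_chordsOfWord (st := []) h rfl
    (⟨le_rfl, List.pairwise_singleton _ _⟩ : IsStack 0 0 [])
  simp only [chordsOfWord_ballotWord] at hflip
  exact assocGraph_adj_iff.2 ⟨hflip.card_sdiff (isTriang_chordSet t.2),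
    hflip.symm.card_sdiff (isTriang_chordSet s.2)⟩

lemma flipEnergy_extend_ballotWord_le (hn : 2 ≤ n) (g : Triangulation n → ℝ) :
    flipEnergy n 0 (Function.extend ballotWord g 0)
      ≤ 4 * n * dirichletForm (flipWalkMatrix n) g := by
  classical
  have hn' : (2 : ℝ) ≤ n := by exact_mod_cast hn
  have hpos : (0 : ℝ) < n - 1 := by linarith
  have hsub : flipPairs n 0 ⊆ ((univ : Finset (Triangulation n × Triangulation n)).filter
      fun p => (assocGraph n).Adj p.1 p.2).image (Prod.map ballotWord ballotWord) := by
    rintro ⟨w, v⟩ hp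
    obtain ⟨hw, hv⟩ := mem_ballotWords_of_mem_flipPairs hp
    rw [← image_ballotWord] at hw hv
    obtain ⟨s, -, rfl⟩ := mem_image.1 hw
    obtain ⟨t, -, rfl⟩ := mem_image.1 hv
    exact mem_image.2 ⟨(s, t), mem_filter.2 ⟨mem_univ _, adj_of_mem_flipPairs hp⟩, rfl⟩
  have hentry {s t : Triangulation n} (h : (assocGraph n).Adj s t) :
      1 ≤ 2 * n * flipWalkMatrix n s t := by
    rw [flipWalkMatrix, if_pos h, mul_one_div, le_div_iff₀ (by positivity)]
    linarith
  calc flipEnergy n 0 (Function.extend ballotWord g 0)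
      ≤ ∑ p : Triangulation n × Triangulation n with (assocGraph n).Adj p.1 p.2,
          (g p.1 - g p.2) ^ 2 := by
        refine (sum_le_sum_of_subset_of_nonneg hsub fun _ _ _ => sq_nonneg _).trans_eq ?_
        rw [sum_image (ballotWord_injective.prodMap ballotWord_injective).injOn]
        simp only [Prod.map_fst, Prod.map_snd, ballotWord_injective.extend_apply]
    _ ≤ ∑ p : Triangulation n × Triangulation n with (assocGraph n).Adj p.1 p.2,
          2 * n * flipWalkMatrix n p.1 p.2 * (g p.1 - g p.2) ^ 2 :=
        sum_le_sum fun p hp =>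
          le_mul_of_one_le_left (sq_nonneg _) (hentry (mem_filter.1 hp).2)
    _ ≤ ∑ p : Triangulation n × Triangulation n,
          2 * n * flipWalkMatrix n p.1 p.2 * (g p.1 - g p.2) ^ 2 :=
        sum_le_sum_of_subset_of_nonneg (filter_subset _ _) fun p _ _ => by
          have := nonneg_of_mem_doublyStochastic (flipWalkMatrix_mem_doublyStochastic hn)
            (i := p.1) (j := p.2)
          positivity
    _ = 4 * n * dirichletForm (flipWalkMatrix n) g := by
        simp only [dirichletForm, Fintype.sum_prod_type, mul_sum]
        exact sum_congr rfl fun s _ => sum_congr rfl fun t _ => by ring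

theorem entropy_triangulation_le (hn : 2 ≤ n) (g : Triangulation n → ℝ) :
    entropy univ (fun t => g t ^ 2)
      ≤ 512 * (n : ℝ) ^ 3 * dirichletForm (flipWalkMatrix n) g := by
  have hls := entropy_ballotWords_le n 0 (Function.extend ballotWord g 0)
  rw [← image_ballotWord, entropy_image ballotWord_injective] at hls
  simp only [ballotWord_injective.extend_apply, Nat.cast_zero, add_zero] at hls
  calc _ ≤ _ := hls
    _ ≤ 32 * (2 * n) ^ 2 * (4 * n * dirichletForm (flipWalkMatrix n) g) := by
        gcongr
        exact flipEnergy_extend_ballotWord_le hn g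
    _ = _ := by ring

lemma log_thirtyTwo_mul_le (hn : 2 ≤ n) : Real.log (16 * (2 * n)) ≤ 6 * Real.log n := by
  have hn' : (2 : ℝ) ≤ n := by exact_mod_cast hn
  have hlog : Real.log 2 ≤ Real.log n := Real.log_le_log two_pos hn'
  calc Real.log (16 * (2 * n)) = 5 * Real.log 2 + Real.log n := by
        rw [show (16 * (2 * n) : ℝ) = 2 ^ 5 * n by ring,
          Real.log_mul (by positivity) (by positivity), Real.log_pow, Nat.cast_ofNat]
    _ ≤ 6 * Real.log n := by linarith

lemma log_le_three_mul_log_pow_three (hn : 2 ≤ n) : Real.log n ≤ 3 * Real.log n ^ 3 := by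
  have hlog : Real.log 2 ≤ Real.log n := Real.log_le_log two_pos (by exact_mod_cast hn)
  have hlog' : 0.69 ≤ Real.log n := by linarith [Real.log_two_gt_d9]
  calc Real.log n ≤ 3 * 0.69 ^ 2 * Real.log n := le_mul_of_one_le_left (by linarith) (by norm_num)
    _ ≤ 3 * Real.log n ^ 2 * Real.log n := by gcongr
    _ = 3 * Real.log n ^ 3 := by ring

end FlipWalk

open FlipWalk in
theorem triangulation_flip_walk_mixing_general {n : ℕ} (hn : 2 ≤ n) {t : ℕ}
    (ht : 3072 * (n : ℝ) ^ 3 * Real.log n ≤ t) (x : Triangulation n) :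
    (1 / 2 : ℝ) * ∑ y : Triangulation n,
        |(flipWalkMatrix n ^ t) x y - 1 / (Nat.card (Triangulation n) : ℝ)|
      ≤ 1 / 4 := by
  have : (0 : ℝ) < n := by exact_mod_cast Nat.zero_lt_of_lt hn
  rw [Nat.card_eq_fintype_card]
  refine tvDist_pow_row_le_quarter (flipWalkMatrix_mem_doublyStochastic hn)
    (fun s => (flipWalkMatrix_diag n s).ge) (by positivity) (entropy_triangulation_le hn)
    (by positivity) (log_card_triangulation_le n) ?_ x
  calc 512 * (n : ℝ) ^ 3 * Real.log (16 * (2 * n)) ≤ 512 * (n : ℝ) ^ 3 * (6 * Real.log n) := by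
        gcongr
        exact log_thirtyTwo_mul_le hn
    _ = 3072 * (n : ℝ) ^ 3 * Real.log n := by ring
    _ ≤ t := ht

/-- there is an absolute constant `A` such that for every `n ≥ 2`, for
every integer `t ≥ A·n³·(log n)³` and every starting triangulation `x`, the total
variation distance between row `x` of `P^t` and the uniform distribution on the
triangulations of the convex `(n+2)`-gon is at most 1/4. -/
theorem triangulation_flip_walk_mixing :
    ∃ A : ℝ, ∀ n : ℕ, 2 ≤ n → ∀ t : ℕ,
      A * (n : ℝ) ^ 3 * Real.log n ^ 3 ≤ (t : ℝ) →
      ∀ x : Triangulation n,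
        (1 / 2 : ℝ) * ∑ y : Triangulation n,
            |(flipWalkMatrix n ^ t) x y - 1 / (Nat.card (Triangulation n) : ℝ)|
          ≤ 1 / 4 :=
  ⟨3072 * 3, fun n hn _ ht => triangulation_flip_walk_mixing_general hn <| ht.trans' <| by
    linear_combination 3072 * (n : ℝ) ^ 3 * FlipWalk.log_le_three_mul_log_pow_three hn⟩
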